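/- For every k ∈ ℕ there exist constants K, K′ ∈ (0,1] such that the following holds. Let R be a commutative ring, let X be a pure d-dimensional finite simplicial complex with d ≥ k+2, regarded as a d-poset, let w be a proper weight function on X, fix an R-orientation on X, let 𝓕 be an R-sheaf on X, and let ε ∈ (0,1]. Assume: (1a) cbe_{k−dim u−1}(X_u, w_u, 𝓕_u) ≥ ε for every face u with 0 ≤ dim u ≤ k; (1b) cbe_{k−dim u}(X_u, w_u, 𝓕_u) ≥ ε for every face u with 0 ≤ dim u ≤ k+1; (2) for every face u with −1 ≤ dim u ≤ k, the underlying weighted graph ugr(X_u, w_u) is a ((Kε)^{2^{k−dim u}}, 1)-skeleton expander. Then ‖d_k f‖_w ≥ K′·(Kε)^{2^{k+2}−1}·dist_w(f, Z^k(X,𝓕)) for every f ∈ C^k(X,𝓕), and ‖f‖_w ≥ K′·(Kε)^{2^{k+1}−1} for every f ∈ Z^k(X,𝓕) not lying in B^k(X,𝓕). -/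

import Mathlib

open scoped Classical

noncomputable section

namespace FK

variable {V : Type*} [Fintype V] [PartialOrder V]

/-- The set of faces of dimension `i`. -/
def faces (dim : V → ℤ) (i : ℤ) : Finset V :=
  Finset.univ.filter fun x => dim x = i

/-- The set of faces of dimension `i` lying above `z`. -/
def facesAbove (dim : V → ℤ) (i : ℤ) (z : V) : Finset V :=
  Finset.univ.filter fun x => dim x = i ∧ z ≤ x

/-- The set of faces of dimension `i` lying below `y`. -/
def facesBelow (dim : V → ℤ) (i : ℤ) (y : V) : Finset V :=
  Finset.univ.filter fun x => dim x = i ∧ x ≤ y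

/-- The set of faces of dimension `j` lying between `x` and `z`. -/
def facesBetween (dim : V → ℤ) (j : ℤ) (x z : V) : Finset V :=
  Finset.univ.filter fun y => dim y = j ∧ x ≤ y ∧ y ≤ z

/-- Total weight of a finite set of faces. -/
def wsum (w : V → ℝ) (A : Finset V) : ℝ := ∑ x ∈ A, w x

/-- `(V, dim)` is a `d`-poset with least face `bot` (of dimension `-1`). -/
structure IsDPoset (dim : V → ℤ) (d : ℤ) (bot : V) : Prop where
  dim_strictMono : ∀ ⦃x y : V⦄, x < y → dim x < dim y
  dim_covBy : ∀ ⦃x y : V⦄, x ⋖ y → dim y = dim x + 1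
  bot_le : ∀ x : V, bot ≤ x
  dim_bot : dim bot = -1
  pure : ∀ x : V, ∃ y : V, x ≤ y ∧ dim y = d

/-- Graded poset axioms. -/
structure IsGraded (dim : V → ℤ) : Prop where
  dim_strictMono : ∀ ⦃x y : V⦄, x < y → dim x < dim y
  dim_covBy : ∀ ⦃x y : V⦄, x ⋖ y → dim y = dim x + 1

/-- `w` is a proper weight function on the `d`-poset `(V, dim)`. -/
structure IsProperWeight (dim : V → ℤ) (d : ℤ) (w : V → ℝ) : Prop where
  pos : ∀ x : V, 0 < w x
  total : wsum w (faces dim d) = 1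
  eq : ∀ x : V, w x = ∑ y ∈ facesAbove dim d x, w y / ((facesBelow dim (dim x) y).card : ℝ)

/-- The weight function induced on the link of `z`. -/
def linkWeight (dim : V → ℤ) (d : ℤ) (w : V → ℝ) (z x : V) : ℝ :=
  (wsum w (facesAbove dim d z))⁻¹ *
    ∑ y ∈ facesAbove dim d x, w y / ((facesBetween dim (dim x) z y).card : ℝ)

/-- An `R`-orientation on the graded poset `(V, dim)`. -/
structure IsOrientation (R : Type*) [CommRing R] (dim : V → ℤ) (sgn : V → V → R) : Prop where
  isUnit : ∀ ⦃x y : V⦄, x ⋖ y → IsUnit (sgn y x)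
  sum_eq_zero : ∀ ⦃x z : V⦄, x ≤ z → dim z = dim x + 2 →
    ∑ y ∈ Finset.univ.filter (fun y => x < y ∧ y < z), sgn z y * sgn y x = 0

/-- The restriction maps of a sheaf compose. -/
structure IsSheafRes (R : Type*) [CommRing R] (F : V → Type*)
    [∀ x, AddCommGroup (F x)] [∀ x, Module R (F x)]
    (res : ∀ x y : V, x ≤ y → (F x →ₗ[R] F y)) : Prop where
  refl : ∀ x : V, res x x le_rfl = LinearMap.id
  trans : ∀ ⦃x y z : V⦄ (hxy : x ≤ y) (hyz : y ≤ z),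
    (res y z hyz).comp (res x y hxy) = res x z (hxy.trans hyz)

/-- `i`-cochains with coefficients in the sheaf `F`. -/
abbrev Cochain (dim : V → ℤ) (F : V → Type*) (i : ℤ) : Type _ :=
  ∀ x : {x : V // dim x = i}, F x.1

/-- Cochains on the link of `u`, indexed by the ambient dimension `i`
(i.e. link-dimension `i - dim u - 1`). -/
abbrev LCochain (dim : V → ℤ) (F : V → Type*) (u : V) (i : ℤ) : Type _ :=
  ∀ x : {x : V // dim x = i ∧ u ≤ x}, F x.1

section Sheaf

variable {R : Type*} [CommRing R] (dim : V → ℤ) (F : V → Type*)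
  [∀ x, AddCommGroup (F x)] [∀ x, Module R (F x)]
  (sgn : V → V → R) (res : ∀ x y : V, x ≤ y → (F x →ₗ[R] F y))
  (w : V → ℝ) (d : ℤ)

/-- The coboundary map, from dimension `i` to dimension `j` (intended: `j = i + 1`). -/
def coboundary (i j : ℤ) (f : Cochain dim F i) : Cochain dim F j := fun y =>
  ∑ x : {x : V // dim x = i},
    if h : x.1 ≤ y.1 then sgn y.1 x.1 • res x.1 y.1 h (f x) else 0

/-- The coboundary map on the link of `u`. -/
def lcoboundary (u : V) (i j : ℤ) (f : LCochain dim F u i) : LCochain dim F u j := fun y =>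
  ∑ x : {x : V // dim x = i ∧ u ≤ x},
    if h : x.1 ≤ y.1 then sgn y.1 x.1 • res x.1 y.1 h (f x) else 0

/-- Weighted Hamming norm of a cochain. -/
def cnorm {i : ℤ} (f : Cochain dim F i) : ℝ :=
  ∑ x : {x : V // dim x = i}, if f x ≠ 0 then w x.1 else 0

/-- Norm of a cochain on the link of `u`, w.r.t. the weight induced on the link. -/
def lnorm (u : V) {i : ℤ} (f : LCochain dim F u i) : ℝ :=
  ∑ x : {x : V // dim x = i ∧ u ≤ x}, if f x ≠ 0 then linkWeight dim d w u x.1 else 0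

/-- `i`-cocycles. -/
def cocycles (i : ℤ) : Set (Cochain dim F i) :=
  {f | coboundary dim F sgn res i (i + 1) f = 0}

/-- `i`-coboundaries. -/
def coboundariesSet (i : ℤ) : Set (Cochain dim F i) :=
  {f | ∃ g : Cochain dim F (i - 1), coboundary dim F sgn res (i - 1) i g = f}

/-- Weighted Hamming distance from a cochain to a set of cochains. -/
def distTo {i : ℤ} (f : Cochain dim F i) (S : Set (Cochain dim F i)) : ℝ :=
  sInf ((fun g => cnorm dim F w (f - g)) '' S)

/-- Coboundaries on the link of `u`, at ambient dimension `i`. -/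
def lcoboundariesSet (u : V) (i : ℤ) : Set (LCochain dim F u i) :=
  {f | ∃ g : LCochain dim F u (i - 1), lcoboundary dim F sgn res u (i - 1) i g = f}

/-- `cbe_{i - dim u - 1}(X_u, w_u, F_u) ≥ ε`, expressed at ambient dimension `i`. -/
def LinkCbeGe (u : V) (i : ℤ) (ε : ℝ) : Prop :=
  ∀ f : LCochain dim F u i,
    ε * sInf ((fun g => lnorm dim F w d u (f - g)) '' lcoboundariesSet dim F sgn res u i)
      ≤ lnorm dim F w d u (lcoboundary dim F sgn res u i (i + 1) f)

/-- Extension of a link cochain by zero. -/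
def extendByZero (u : V) {i : ℤ} (b : LCochain dim F u i) : Cochain dim F i := fun x =>
  if h : u ≤ x.1 then b ⟨x.1, x.2, h⟩ else 0

/-- `f` is mock `q`-locally minimal at `u`. -/
def MockMinAt (q : ℝ) (m : ℤ) (f : Cochain dim F m) (u : V) : Prop :=
  ∀ g : LCochain dim F u (m - 1),
    cnorm dim F w f ≤
      cnorm dim F w (f + extendByZero dim F u (lcoboundary dim F sgn res u (m - 1) m g)) +
        q * w u

/-- `f` is mock `q`-locally minimal. -/
def MockMin (q : ℝ) (m : ℤ) (f : Cochain dim F m) : Prop :=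
  ∀ u : V, 0 ≤ dim u → dim u ≤ m → MockMinAt dim F sgn res w q m f u

end Sheaf

/-- `ugr(X_u, w_u)` is an `(α, β)`-skeleton expander. -/
def LinkUgrSkeletonExpander (dim : V → ℤ) (d : ℤ) (w : V → ℝ) (u : V) (α β : ℝ) : Prop :=
  ∀ A ⊆ facesAbove dim (dim u + 1) u,
    wsum (linkWeight dim d w u)
        ((facesAbove dim (dim u + 2) u).filter fun e =>
          ∃ x ∈ A, ∃ y ∈ A, x ≠ y ∧ x ≤ e ∧ y ≤ e)
      ≤ α * wsum (linkWeight dim d w u) A + β * wsum (linkWeight dim d w u) A ^ 2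

/-- `ugr(X, w)` is an `(α, β)`-skeleton expander. -/
def UgrSkeletonExpander (dim : V → ℤ) (w : V → ℝ) (α β : ℝ) : Prop :=
  ∀ A ⊆ faces dim 0,
    wsum w ((faces dim 1).filter fun e => ∃ x ∈ A, ∃ y ∈ A, x ≠ y ∧ x ≤ e ∧ y ≤ e)
      ≤ α * wsum w A + β * wsum w A ^ 2

/-- `NI^{1,1,2}(X, w)` is an `(α, β)`-skeleton expander. -/
def NI112SkeletonExpander (dim : V → ℤ) (w : V → ℝ) (bot : V) (α β : ℝ) : Prop :=
  ∀ A ⊆ faces dim 1,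
    wsum w ((faces dim 2).filter fun z =>
        ∃ x ∈ A, ∃ y ∈ A, x ≠ y ∧ x ≤ z ∧ y ≤ z ∧ ∀ t : V, t ≤ x → t ≤ y → t = bot)
      ≤ α * wsum w A + β * wsum w A ^ 2

/-- Pairs of an `i`-face and a `k`-face that are incident. -/
def incidentPairs (dim : V → ℤ) (i k : ℤ) : Finset (V × V) :=
  Finset.univ.filter fun p => dim p.1 = i ∧ dim p.2 = k ∧ p.1 ≤ p.2

/-- `F^max_{i,j,k}(X)`. -/
def Fmax (dim : V → ℤ) (i j k : ℤ) : ℕ :=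
  (incidentPairs dim i k).sup fun p => (facesBetween dim j p.1 p.2).card

/-- `F^min_{i,j,k}(X)`. -/
def Fmin (dim : V → ℤ) (i j k : ℤ) : ℕ :=
  if h : (incidentPairs dim i k).Nonempty then
    ((incidentPairs dim i k).image fun p => (facesBetween dim j p.1 p.2).card).min'
      (h.image _)
  else 0

end FK

namespace FK

/-- The poset of faces of the simplicial complex `Kc`. -/
abbrev SC {ι : Type} (Kc : Finset (Finset ι)) : Type := {s : Finset ι // s ∈ Kc}

/-- The dimension of a simplicial face. -/
def sdim {ι : Type} {Kc : Finset (Finset ι)} (s : SC Kc) : ℤ := (s.1.card : ℤ) - 1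

end FK

/-!
Let `f` be a small `m`-cochain with support `A`. A face of dimension `m - j - 1` is *fat* if its
link contains many fat faces of dimension `m - j`, the fat `m`-faces being those in `A`. As the
total weight of the fat faces grows in a controlled way and `A` is small, the empty face is never
fat, so descending from a face in `A` through fat faces stops at some *terminal* face. Call an
`(m + 1)`-face *bad* if it contains two fat faces that meet in a non-fat face of codimension one;
skeleton expansion of the links makes bad faces rare.

Suppose `f` is a cocycle, and restrict it to the faces that descend to a given terminal face `u`.
The coboundary of this restriction, computed in the link of `u`, is supported on bad faces, so
coboundary expansion of the link bounds the distance from the restriction to the coboundaries of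
the link. If `f` is almost locally minimal, then the restriction itself is that small, and summing
over all terminal faces shows that `‖f‖` is at most a fraction of `‖f‖`. Hence `f = 0`.

An almost locally minimal representative of `f + B^m` is obtained by minimising
`‖f + δ h‖ + c ‖h‖` over `h`. With `c = 0` this shows that a small cocycle is a coboundary. Applied
to `δ f` in place of `f`, with `c > 0`, it yields a cocycle `f + h` such that `c ‖h‖ ≤ ‖δ f‖`.
-/

namespace FK

open Finset

section WeightedSets

variable {α : Type*} {w : α → ℝ}

lemma wsum_nonneg (hw : ∀ x, 0 ≤ w x) (S : Finset α) : 0 ≤ wsum w S :=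
  sum_nonneg fun x _ => hw x

lemma wsum_mono (hw : ∀ x, 0 ≤ w x) {S T : Finset α} (h : S ⊆ T) : wsum w S ≤ wsum w T :=
  sum_le_sum_of_subset_of_nonneg h fun x _ _ => hw x

lemma wsum_biUnion_le [DecidableEq α] (hw : ∀ x, 0 ≤ w x) {β : Type*} (U : Finset β)
    (S : β → Finset α) : wsum w (U.biUnion S) ≤ ∑ u ∈ U, wsum w (S u) := by
  induction U using Finset.induction_on with
  | empty => simp [wsum]
  | insert a U ha ih =>
    rw [biUnion_insert, sum_insert ha]
    have hunion : wsum w (S a ∪ U.biUnion S) + wsum w (S a ∩ U.biUnion S)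
        = wsum w (S a) + wsum w (U.biUnion S) := sum_union_inter
    linarith [wsum_nonneg hw (S a ∩ U.biUnion S)]

end WeightedSets

section WeightedPosets

variable {V : Type*} [PartialOrder V] {dim : V → ℤ} {d i : ℤ} {w : V → ℝ}

/-- The part of `S` lying in the link of `z`. -/
def linkPart (S : Finset V) (z : V) : Finset V := {x ∈ S | z ≤ x}

lemma mem_linkPart {S : Finset V} {x z : V} : x ∈ linkPart S z ↔ x ∈ S ∧ z ≤ x := mem_filter

lemma sum_wsum_linkPart_le [DecidableLE V] (hw : ∀ x, 0 ≤ w x) {U S : Finset V} {c : ℕ}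
    (hc : ∀ y ∈ S, #{u ∈ U | u ≤ y} ≤ c) : ∑ u ∈ U, wsum w (linkPart S u) ≤ c * wsum w S := by
  calc ∑ u ∈ U, wsum w (linkPart S u)
      = ∑ y ∈ S, #{u ∈ U | u ≤ y} * w y := by
        simp only [wsum]
        rw [sum_comm' (t' := S) (s' := fun y => {u ∈ U | u ≤ y})
          (by simp only [mem_linkPart, mem_filter]; tauto)]
        simp only [sum_const, nsmul_eq_mul]
    _ ≤ ∑ y ∈ S, c * w y :=
        sum_le_sum fun y hy => mul_le_mul_of_nonneg_right (by exact_mod_cast hc y hy) (hw y)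
    _ = c * wsum w S := by rw [wsum, mul_sum]

variable [Fintype V]

lemma mem_facesAbove {x z : V} : x ∈ facesAbove dim i z ↔ dim x = i ∧ z ≤ x := by
  simp [facesAbove]

lemma mem_facesBelow {x y : V} : x ∈ facesBelow dim i y ↔ dim x = i ∧ x ≤ y := by
  simp [facesBelow]

lemma mem_facesBetween {x y z : V} : x ∈ facesBetween dim i z y ↔ dim x = i ∧ z ≤ x ∧ x ≤ y := by
  simp [facesBetween]

lemma linkWeight_nonneg (hw : ∀ x, 0 ≤ w x) (z x : V) : 0 ≤ linkWeight dim d w z x :=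
  mul_nonneg (inv_nonneg.2 (wsum_nonneg hw _))
    (sum_nonneg fun y _ => div_nonneg (hw y) (Nat.cast_nonneg _))

/-- The edges of the link of `z` having two distinct endpoints in `A`, as faces of the ambient
poset. -/
def linkEdges (dim : V → ℤ) (z : V) (A : Finset V) : Finset V :=
  {e ∈ facesAbove dim (dim z + 2) z | ∃ x ∈ A, ∃ y ∈ A, x ≠ y ∧ x ≤ e ∧ y ≤ e}

lemma mem_linkEdges {z e : V} {A : Finset V} : e ∈ linkEdges dim z A ↔
    (dim e = dim z + 2 ∧ z ≤ e) ∧ ∃ x ∈ A, ∃ y ∈ A, x ≠ y ∧ x ≤ e ∧ y ≤ e := by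
  simp [linkEdges, mem_facesAbove]

lemma LinkUgrSkeletonExpander.mono (hw : ∀ x, 0 ≤ w x) {u : V} {α α' β : ℝ} (hα : α ≤ α')
    (h : LinkUgrSkeletonExpander dim d w u α β) : LinkUgrSkeletonExpander dim d w u α' β :=
  fun A hA => (h A hA).trans <| add_le_add_left
    (mul_le_mul_of_nonneg_right hα (wsum_nonneg (linkWeight_nonneg hw u) A)) _

end WeightedPosets

section SimplicialWeights

variable {ι : Type} {Kc : Finset (Finset ι)} {d i : ℤ} {w : SC Kc → ℝ}

lemma sdim_strictMono : StrictMono (sdim (Kc := Kc)) := fun _ _ h =>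
  sub_lt_sub_right (Nat.cast_lt.2 (card_lt_card h)) 1

lemma card_facesBetween (hK : IsLowerSet (Kc : Set (Finset ι))) {z y : SC Kc} (hzy : z ≤ y)
    {n : ℕ} (hi : i + 1 = n) (hn : #z.1 ≤ n) :
    #(facesBetween sdim i z y) = (#y.1 - #z.1).choose (n - #z.1) := by
  rw [← card_sdiff_of_subset hzy, ← card_powersetCard]
  refine card_bij' (fun x _ => x.1 \ z.1)
    (fun s hs => ⟨s ∪ z.1, hK (union_subset ((mem_powersetCard.1 hs).1.trans sdiff_subset) hzy)
      y.2⟩) (fun x hx => ?_) (fun s hs => ?_) (fun x hx => ?_) (fun s hs => ?_)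
  · obtain ⟨hxi, hzx, hxy⟩ := mem_facesBetween.1 hx
    refine mem_powersetCard.2 ⟨sdiff_subset_sdiff hxy le_rfl, ?_⟩
    rw [card_sdiff_of_subset hzx]
    grind [sdim]
  · obtain ⟨hs, hcard⟩ := mem_powersetCard.1 hs
    have hdisj : Disjoint s z.1 := disjoint_of_subset_left hs sdiff_disjoint
    refine mem_facesBetween.2
      ⟨?_, subset_union_right, union_subset (hs.trans sdiff_subset) hzy⟩
    rw [sdim, card_union_of_disjoint hdisj]
    omega
  · exact Subtype.ext (sdiff_union_of_subset (mem_facesBetween.1 hx).2.1)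
  · rw [union_sdiff_right, sdiff_eq_self_of_disjoint]
    exact disjoint_of_subset_left (mem_powersetCard.1 hs).1 sdiff_disjoint

lemma card_facesBelow (hK : IsLowerSet (Kc : Set (Finset ι))) (y : SC Kc) {n : ℕ}
    (hi : i + 1 = n) : #(facesBelow sdim i y) = (#y.1).choose n := by
  let bot : SC Kc := ⟨∅, hK (empty_subset y.1) y.2⟩
  have hbelow : facesBelow sdim i y = facesBetween sdim i bot y := by
    ext x
    simp [mem_facesBelow, mem_facesBetween, show bot ≤ x from empty_subset x.1]
  rw [hbelow, card_facesBetween hK (empty_subset y.1) hi (by simp [bot])]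
  simp [bot]

lemma card_filter_le_le_two_pow (U : Finset (SC Kc)) (y : SC Kc) :
    #{u ∈ U | u ≤ y} ≤ 2 ^ #y.1 := by
  rw [← card_powerset]
  exact card_le_card_of_injOn Subtype.val (fun u hu => by simpa using (mem_filter.1 hu).2)
    Subtype.val_injective.injOn

lemma card_le_dim_add_one (hw : IsProperWeight sdim d w) (x : SC Kc) : (#x.1 : ℤ) ≤ d + 1 := by
  have hne : (facesAbove sdim d x).Nonempty := by
    by_contra hempty
    have := hw.eq x
    rw [not_nonempty_iff_eq_empty.1 hempty, sum_empty] at this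
    exact (hw.pos x).ne' this
  obtain ⟨y, hy⟩ := hne
  obtain ⟨rfl, hxy⟩ := mem_facesAbove.1 hy
  have : #x.1 ≤ #y.1 := card_le_card hxy
  rw [sdim]
  omega

lemma exists_natCast_eq_dim_add_one (hw : IsProperWeight sdim d w) (x : SC Kc) :
    ∃ D : ℕ, d + 1 = D :=
  ⟨(d + 1).toNat, by have := card_le_dim_add_one hw x; omega⟩

lemma wsum_facesAbove_top (hK : IsLowerSet (Kc : Set (Finset ι))) (hw : IsProperWeight sdim d w)
    {D : ℕ} (hD : d + 1 = D) (x : SC Kc) :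
    wsum w (facesAbove sdim d x) = w x * D.choose #x.1 := by
  have hx : #x.1 ≤ D := by have := card_le_dim_add_one hw x; omega
  have hpos : (0 : ℝ) < D.choose #x.1 := by exact_mod_cast Nat.choose_pos hx
  rw [hw.eq x, sum_mul]
  refine sum_congr rfl fun y hy => ?_
  have hyD : #y.1 = D := by have := (mem_facesAbove.1 hy).1; grind [sdim]
  rw [card_facesBelow hK y (n := #x.1) (by rw [sdim]; omega), hyD, div_mul_cancel₀ _ hpos.ne']

lemma linkWeight_eq (hK : IsLowerSet (Kc : Set (Finset ι))) (hw : IsProperWeight sdim d w)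
    {u x : SC Kc} (hux : u ≤ x) :
    linkWeight sdim d w u x = w x / ((#x.1).choose #u.1 * w u) := by
  obtain ⟨D, hD⟩ := exists_natCast_eq_dim_add_one hw x
  have hcard : #u.1 ≤ #x.1 := card_le_card hux
  have hxD : #x.1 ≤ D := by have := card_le_dim_add_one hw x; omega
  have hsum : ∑ y ∈ facesAbove sdim d x, w y / (#(facesBetween sdim (sdim x) u y) : ℝ)
      = w x * D.choose #x.1 / (D - #u.1).choose (#x.1 - #u.1) := by
    rw [← wsum_facesAbove_top hK hw hD, wsum, sum_div]
    refine sum_congr rfl fun y hy => ?_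
    obtain ⟨hy, hxy⟩ := mem_facesAbove.1 hy
    have hyD : #y.1 = D := by grind [sdim]
    rw [card_facesBetween hK (hux.trans hxy) (n := #x.1) (by rw [sdim]; omega) hcard, hyD]
  rw [linkWeight, wsum_facesAbove_top hK hw hD, hsum]
  have hchoose : (D.choose #x.1 : ℝ) * (#x.1).choose #u.1
      = D.choose #u.1 * (D - #u.1).choose (#x.1 - #u.1) := by
    exact_mod_cast Nat.choose_mul hcard
  have hu := hw.pos u
  have h₁ : (0 : ℝ) < D.choose #u.1 := by exact_mod_cast Nat.choose_pos (hcard.trans hxD)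
  have h₂ : (0 : ℝ) < (D - #u.1).choose (#x.1 - #u.1) := by
    exact_mod_cast Nat.choose_pos (Nat.sub_le_sub_right hxD _)
  have h₃ : (0 : ℝ) < (#x.1).choose #u.1 := by exact_mod_cast Nat.choose_pos hcard
  field_simp
  linear_combination w x * hchoose

lemma wsum_facesAbove (hK : IsLowerSet (Kc : Set (Finset ι))) (hw : IsProperWeight sdim d w)
    (z : SC Kc) {n : ℕ} (hi : i + 1 = n) (hid : i ≤ d) (hn : #z.1 ≤ n) :
    wsum w (facesAbove sdim i z) = n.choose #z.1 * w z := by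
  obtain ⟨D, hD⟩ := exists_natCast_eq_dim_add_one hw z
  have hnD : n ≤ D := by omega
  have hpos : (0 : ℝ) < D.choose n := by exact_mod_cast Nat.choose_pos hnD
  have hdouble : wsum w (facesAbove sdim i z) * D.choose n
      = (D - #z.1).choose (n - #z.1) * (w z * D.choose #z.1) :=
    calc wsum w (facesAbove sdim i z) * D.choose n
        = ∑ x ∈ facesAbove sdim i z, wsum w (facesAbove sdim d x) := by
          rw [wsum, sum_mul]
          refine sum_congr rfl fun x hx => ?_
          have hxn : #x.1 = n := by have := (mem_facesAbove.1 hx).1; grind [sdim]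
          rw [wsum_facesAbove_top hK hw hD, hxn]
      _ = ∑ y ∈ facesAbove sdim d z, #(facesBetween sdim i z y) * w y := by
          simp only [wsum]
          rw [sum_comm' (t' := facesAbove sdim d z) (s' := facesBetween sdim i z)]
          · simp only [sum_const, nsmul_eq_mul]
          · intro x y
            simp only [mem_facesAbove, mem_facesBetween]
            exact ⟨fun ⟨⟨hx, hzx⟩, hy, hxy⟩ => ⟨⟨hx, hzx, hxy⟩, hy, hzx.trans hxy⟩,
              fun ⟨⟨hx, hzx, hxy⟩, hy, _⟩ => ⟨⟨hx, hzx⟩, hy, hxy⟩⟩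
      _ = (D - #z.1).choose (n - #z.1) * (w z * D.choose #z.1) := by
          rw [← wsum_facesAbove_top hK hw hD, wsum, mul_sum]
          refine sum_congr rfl fun y hy => ?_
          obtain ⟨hy, hzy⟩ := mem_facesAbove.1 hy
          have hyD : #y.1 = D := by grind [sdim]
          rw [card_facesBetween hK hzy hi hn, hyD]
  have hchoose : (D.choose n : ℝ) * n.choose #z.1
      = D.choose #z.1 * (D - #z.1).choose (n - #z.1) := by exact_mod_cast Nat.choose_mul hn
  apply mul_right_cancel₀ hpos.ne'
  linear_combination hdouble - w z * hchoose

lemma wsum_facesAbove_le (hK : IsLowerSet (Kc : Set (Finset ι))) (hw : IsProperWeight sdim d w)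
    (z : SC Kc) {n : ℕ} (hin : i + 1 ≤ n) (hid : i ≤ d) :
    wsum w (facesAbove sdim i z) ≤ 2 ^ n * w z := by
  have hz := hw.pos z
  rcases le_or_gt (#z.1 : ℤ) (i + 1) with hzi | hzi
  · obtain ⟨l, hl⟩ : ∃ l : ℕ, i + 1 = l := ⟨(i + 1).toNat, by omega⟩
    rw [wsum_facesAbove hK hw z hl hid (by omega)]
    gcongr
    calc ((l.choose #z.1 : ℕ) : ℝ) ≤ 2 ^ l := by exact_mod_cast Nat.choose_le_two_pow l _
      _ ≤ 2 ^ n := pow_le_pow_right₀ one_le_two (by omega)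
  · have hempty : facesAbove sdim i z = ∅ := by
      refine eq_empty_of_forall_notMem fun x hx => ?_
      obtain ⟨hx, hzx⟩ := mem_facesAbove.1 hx
      have : #z.1 ≤ #x.1 := card_le_card hzx
      grind [sdim]
    rw [hempty, wsum, sum_empty]
    positivity

lemma faces_eq_facesAbove {z : SC Kc} (hz : z.1 = ∅) (i : ℤ) :
    faces sdim i = facesAbove sdim i z := by
  have hle : ∀ x : SC Kc, z ≤ x := fun x => show z.1 ⊆ x.1 from hz.symm ▸ empty_subset x.1
  ext x
  simp [faces, mem_facesAbove, hle]

lemma weight_empty (hK : IsLowerSet (Kc : Set (Finset ι))) (hw : IsProperWeight sdim d w)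
    {z : SC Kc} (hz : z.1 = ∅) : w z = 1 := by
  obtain ⟨D, hD⟩ := exists_natCast_eq_dim_add_one hw z
  have htotal := hw.total
  rw [faces_eq_facesAbove hz, wsum_facesAbove_top hK hw hD] at htotal
  simpa [hz] using htotal

lemma wsum_faces (hK : IsLowerSet (Kc : Set (Finset ι))) (hw : IsProperWeight sdim d w)
    {z : SC Kc} (hz : z.1 = ∅) {n : ℕ} (hi : i + 1 = n) (hid : i ≤ d) :
    wsum w (faces sdim i) = 1 := by
  rw [faces_eq_facesAbove hz, wsum_facesAbove hK hw z hi hid (by simp [hz])]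
  simp [hz, weight_empty hK hw hz]

lemma wsum_eq_wsum_linkWeight (hK : IsLowerSet (Kc : Set (Finset ι)))
    (hw : IsProperWeight sdim d w) {z : SC Kc} {n : ℕ} {S : Finset (SC Kc)}
    (hS : ∀ x ∈ S, z ≤ x ∧ #x.1 = n) (hn : #z.1 ≤ n) :
    wsum w S = n.choose #z.1 * w z * wsum (linkWeight sdim d w z) S := by
  have hz := hw.pos z
  have hpos : (0 : ℝ) < n.choose #z.1 := by exact_mod_cast Nat.choose_pos hn
  rw [wsum, wsum, mul_sum]
  refine sum_congr rfl fun x hx => ?_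
  rw [linkWeight_eq hK hw (hS x hx).1, (hS x hx).2]
  field_simp

end SimplicialWeights

section FatFaces

variable {V : Type*} [Fintype V] [PartialOrder V] (dim : V → ℤ) (d : ℤ) (w : V → ℝ) (m : ℤ)
  (t : ℝ) (A : Finset V)

/-- The `j`-fat faces of a set `A` of `m`-faces, at threshold `t`: the faces of dimension `m - j`
whose link contains many `(j - 1)`-fat faces. The thresholds `t ^ 2 ^ j` decrease fast enough for
the skeleton expansion of the links to absorb the quadratic error at every level. -/
def fatFaces : ℕ → Finset V
  | 0 => A
  | j + 1 => {z | dim z = m - (j + 1) ∧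
      t ^ 2 ^ j ≤ wsum (linkWeight dim d w z) (linkPart (fatFaces j) z)}

/-- The `(m + 1)`-faces containing two `j`-fat faces, for some `j`, which meet in a non-fat face
of codimension one. Away from them, intersections of neighbouring fat faces are again fat. -/
def badFaces : Finset V :=
  {y | dim y = m + 1 ∧ ∃ j, ∃ z ∉ fatFaces dim d w m t A (j + 1), dim z = m - (j + 1) ∧
    ∃ e ∈ linkEdges dim z (linkPart (fatFaces dim d w m t A j) z), e ≤ y}

/-- `FatChain dim d w m t A j u x` says that `u` is reached from `x ∈ A` by descending through an
`i`-fat face for each `i ≤ j`. -/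
inductive FatChain : ℕ → V → V → Prop
  | single {x : V} (hx : x ∈ A) : FatChain 0 x x
  | cons {j : ℕ} {u v x : V} (hu : u ∈ fatFaces dim d w m t A (j + 1)) (huv : u ≤ v)
      (hvx : FatChain j v x) : FatChain (j + 1) u x

/-- The `j`-fat faces at which the descent through fat faces stops. -/
def terminalFaces (j : ℕ) : Finset V :=
  {u ∈ fatFaces dim d w m t A j | ∀ v ≤ u, v ∉ fatFaces dim d w m t A (j + 1)}

/-- The faces in `A` from which the `j`-fat face `u` is reached. -/
def fatCone (j : ℕ) (u : V) : Finset V :=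
  {x ∈ A | FatChain dim d w m t A j u x}

/-- The skeleton expansion of the links of low-dimensional faces matching the thresholds of
`fatFaces`. -/
def SkeletonExpandingLinks : Prop :=
  ∀ (j : ℕ) (z : V), dim z = m - (j + 1) → LinkUgrSkeletonExpander dim d w z (t ^ 2 ^ j) 1

variable {dim d w m t A} {j : ℕ} {u x z : V}

lemma mem_fatFaces_succ : z ∈ fatFaces dim d w m t A (j + 1) ↔ dim z = m - (j + 1) ∧
    t ^ 2 ^ j ≤ wsum (linkWeight dim d w z) (linkPart (fatFaces dim d w m t A j) z) := by
  simp [fatFaces]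

lemma mem_terminalFaces : u ∈ terminalFaces dim d w m t A j ↔
    u ∈ fatFaces dim d w m t A j ∧ ∀ v ≤ u, v ∉ fatFaces dim d w m t A (j + 1) :=
  mem_filter

lemma dim_of_mem_fatFaces (hA : ∀ x ∈ A, dim x = m) (hx : x ∈ fatFaces dim d w m t A j) :
    dim x = m - j := by
  cases j with
  | zero => simpa using hA x hx
  | succ j => simpa using (mem_fatFaces_succ.1 hx).1

lemma FatChain.mem_fatFaces (h : FatChain dim d w m t A j u x) : u ∈ fatFaces dim d w m t A j := by
  cases h with
  | single hx => exact hx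
  | cons hu => exact hu

lemma FatChain.le (h : FatChain dim d w m t A j u x) : u ≤ x := by
  induction h with
  | single => exact le_rfl
  | cons _ huv _ ih => exact huv.trans ih

lemma exists_terminalFaces_fatChain {N : ℕ} (hN : ∀ z, z ∉ fatFaces dim d w m t A N) (hx : x ∈ A) :
    ∃ j < N, ∃ u ∈ terminalFaces dim d w m t A j, FatChain dim d w m t A j u x := by
  by_contra! hcon
  have hreach : ∀ j ≤ N, ∃ u, FatChain dim d w m t A j u x := by
    intro j hj
    induction j with
    | zero => exact ⟨x, .single hx⟩
    | succ j ih =>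
      obtain ⟨u, hu⟩ := ih (Nat.le_of_succ_le hj)
      by_contra! hno
      exact hcon j hj u (mem_filter.2 ⟨hu.mem_fatFaces, fun v hvu hv => hno v (.cons hv hvu hu)⟩) hu
  obtain ⟨u, hu⟩ := hreach N le_rfl
  exact hN u hu.mem_fatFaces

end FatFaces

section SimplicialFatFaces

variable {ι : Type} {Kc : Finset (Finset ι)} {d m : ℤ} {w : SC Kc → ℝ} {t : ℝ} {N j : ℕ}
  {A : Finset (SC Kc)}

lemma card_add_of_mem_fatFaces (hA : ∀ x ∈ A, sdim x = m) (hm : m + 1 = N) {x : SC Kc}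
    (hx : x ∈ fatFaces sdim d w m t A j) : #x.1 + j = N := by
  have := dim_of_mem_fatFaces hA hx
  grind [sdim]

lemma card_mul_pow_mul_weight_le (hK : IsLowerSet (Kc : Set (Finset ι)))
    (hw : IsProperWeight sdim d w) (hA : ∀ x ∈ A, sdim x = m) (hm : m + 1 = N) {z : SC Kc}
    (hz : z ∈ fatFaces sdim d w m t A (j + 1)) :
    (#z.1 + 1) * t ^ 2 ^ j * w z ≤ wsum w (linkPart (fatFaces sdim d w m t A j) z) := by
  have hzN := card_add_of_mem_fatFaces hA hm hz
  rw [wsum_eq_wsum_linkWeight hK hw (z := z) (n := #z.1 + 1) (fun x hx => ?_) (by omega),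
    Nat.choose_succ_self_right]
  · have := mul_le_mul_of_nonneg_left (mem_fatFaces_succ.1 hz).2
      (mul_nonneg ((#z.1).cast_add_one_pos (α := ℝ)).le (hw.pos z).le)
    push_cast
    linarith
  · obtain ⟨hx, hzx⟩ := mem_linkPart.1 hx
    have := card_add_of_mem_fatFaces hA hm hx
    exact ⟨hzx, by omega⟩

lemma pow_mul_wsum_fatFaces_succ_le (hK : IsLowerSet (Kc : Set (Finset ι)))
    (hw : IsProperWeight sdim d w) (hA : ∀ x ∈ A, sdim x = m) (hm : m + 1 = N) (j : ℕ) :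
    t ^ 2 ^ j * wsum w (fatFaces sdim d w m t A (j + 1)) ≤ wsum w (fatFaces sdim d w m t A j) := by
  have hw0 x : 0 ≤ w x := (hw.pos x).le
  rcases (fatFaces sdim d w m t A (j + 1)).eq_empty_or_nonempty with hempty | ⟨z₀, hz₀⟩
  · simpa [hempty, wsum] using wsum_nonneg hw0 _
  obtain ⟨n, hn⟩ : ∃ n, n + 1 + j = N :=
    ⟨#z₀.1, by have := card_add_of_mem_fatFaces hA hm hz₀; omega⟩
  have hfat z (hz : z ∈ fatFaces sdim d w m t A (j + 1)) :
      (n + 1) * t ^ 2 ^ j * w z ≤ wsum w (linkPart (fatFaces sdim d w m t A j) z) := by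
    have hzn : #z.1 = n := by have := card_add_of_mem_fatFaces hA hm hz; omega
    exact hzn ▸ card_mul_pow_mul_weight_le hK hw hA hm hz
  have hcount x (hx : x ∈ fatFaces sdim d w m t A j) :
      #{z ∈ fatFaces sdim d w m t A (j + 1) | z ≤ x} ≤ n + 1 := by
    have hxn : #x.1 = n + 1 := by have := card_add_of_mem_fatFaces hA hm hx; omega
    rw [← Nat.choose_succ_self_right n, ← hxn,
      ← card_facesBelow hK x (i := m - (j + 1)) (by omega)]
    refine card_le_card fun z hz => ?_
    obtain ⟨hz, hzx⟩ := mem_filter.1 hz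
    exact mem_facesBelow.2 ⟨(mem_fatFaces_succ.1 hz).1, hzx⟩
  refine le_of_mul_le_mul_left ?_ (n.cast_add_one_pos (α := ℝ))
  calc (n + 1 : ℝ) * (t ^ 2 ^ j * wsum w (fatFaces sdim d w m t A (j + 1)))
      = ∑ z ∈ fatFaces sdim d w m t A (j + 1), (n + 1) * t ^ 2 ^ j * w z := by
        rw [wsum, ← mul_assoc, mul_sum]
    _ ≤ ∑ z ∈ fatFaces sdim d w m t A (j + 1), wsum w (linkPart (fatFaces sdim d w m t A j) z) :=
        sum_le_sum hfat
    _ ≤ (n + 1) * wsum w (fatFaces sdim d w m t A j) := by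
        simpa using sum_wsum_linkPart_le hw0 hcount

lemma pow_mul_wsum_fatFaces_le (hK : IsLowerSet (Kc : Set (Finset ι)))
    (hw : IsProperWeight sdim d w) (hA : ∀ x ∈ A, sdim x = m) (hm : m + 1 = N) (ht : 0 ≤ t)
    (j : ℕ) : t ^ (2 ^ j - 1) * wsum w (fatFaces sdim d w m t A j) ≤ wsum w A := by
  induction j with
  | zero => simp [fatFaces]
  | succ j ih =>
    have hexp : 2 ^ (j + 1) - 1 = (2 ^ j - 1) + 2 ^ j := by
      have := Nat.two_pow_pos j
      rw [pow_succ]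
      omega
    calc t ^ (2 ^ (j + 1) - 1) * wsum w (fatFaces sdim d w m t A (j + 1))
        = t ^ (2 ^ j - 1) * (t ^ 2 ^ j * wsum w (fatFaces sdim d w m t A (j + 1))) := by
          rw [hexp, pow_add, mul_assoc]
      _ ≤ t ^ (2 ^ j - 1) * wsum w (fatFaces sdim d w m t A j) := by
          gcongr
          exact pow_mul_wsum_fatFaces_succ_le hK hw hA hm j
      _ ≤ wsum w A := ih

lemma notMem_fatFaces_of_wsum_lt (hK : IsLowerSet (Kc : Set (Finset ι)))
    (hw : IsProperWeight sdim d w) (hA : ∀ x ∈ A, sdim x = m) (hm : m + 1 = N) (ht : 0 ≤ t)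
    (hsmall : wsum w A < t ^ (2 ^ N - 1)) (z : SC Kc) : z ∉ fatFaces sdim d w m t A N := by
  intro hz
  have hz0 : z.1 = ∅ := card_eq_zero.1 (by have := card_add_of_mem_fatFaces hA hm hz; omega)
  have hone : 1 ≤ wsum w (fatFaces sdim d w m t A N) :=
    weight_empty hK hw hz0 ▸ single_le_sum (f := w) (fun x _ => (hw.pos x).le) hz
  have hA' := pow_mul_wsum_fatFaces_le hK hw hA hm ht N
  have := le_mul_of_one_le_right (pow_nonneg ht (2 ^ N - 1)) hone
  linarith

lemma wsum_linkEdges_le (hK : IsLowerSet (Kc : Set (Finset ι))) (hw : IsProperWeight sdim d w)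
    {z : SC Kc} {S : Finset (SC Kc)} (hS : ∀ x ∈ S, z ≤ x ∧ #x.1 = #z.1 + 1) {η : ℝ}
    (hexp : LinkUgrSkeletonExpander sdim d w z η 1)
    (hSη : wsum (linkWeight sdim d w z) S ≤ η) :
    wsum w (linkEdges sdim z S) ≤ (#z.1 + 2) * η * wsum w S := by
  set v := wsum (linkWeight sdim d w z) S with hv
  have hv0 : 0 ≤ v := wsum_nonneg (linkWeight_nonneg (fun x => (hw.pos x).le) z) S
  have hz := hw.pos z
  have hedges : wsum (linkWeight sdim d w z) (linkEdges sdim z S) ≤ 2 * η * v := by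
    have h : wsum (linkWeight sdim d w z) (linkEdges sdim z S) ≤ η * v + 1 * v ^ 2 :=
      hexp S fun x hx => mem_facesAbove.2 ⟨by have := (hS x hx).2; grind [sdim], (hS x hx).1⟩
    nlinarith
  have hchoose : (((#z.1 + 2).choose #z.1 : ℕ) : ℝ) = (#z.1 + 2) * (#z.1 + 1) / 2 := by
    rw [Nat.choose_symm_add, Nat.cast_choose_two]
    push_cast
    ring
  rw [wsum_eq_wsum_linkWeight hK hw (z := z) (n := #z.1 + 2) (S := linkEdges sdim z S)
      (fun e he => by have := (mem_linkEdges.1 he).1; grind [sdim]) (by omega),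
    wsum_eq_wsum_linkWeight hK hw hS (by omega), ← hv, hchoose, Nat.choose_succ_self_right]
  calc (#z.1 + 2) * (#z.1 + 1) / 2 * w z * wsum (linkWeight sdim d w z) (linkEdges sdim z S)
      ≤ (#z.1 + 2) * (#z.1 + 1) / 2 * w z * (2 * η * v) := by gcongr
    _ = (#z.1 + 2) * η * (((#z.1 + 1 : ℕ) : ℝ) * w z * v) := by push_cast; ring

lemma sum_wsum_facesAbove_linkEdges_le (hK : IsLowerSet (Kc : Set (Finset ι)))
    (hw : IsProperWeight sdim d w) (hA : ∀ x ∈ A, sdim x = m) (hm : m + 1 = N) (hd : m + 1 ≤ d)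
    (ht : 0 ≤ t) (hexp : SkeletonExpandingLinks sdim d w m t) {z : SC Kc}
    (hz : z ∉ fatFaces sdim d w m t A (j + 1)) (hzj : sdim z = m - (j + 1)) :
    ∑ e ∈ linkEdges sdim z (linkPart (fatFaces sdim d w m t A j) z),
        wsum w (facesAbove sdim (m + 1) e)
      ≤ 2 ^ (2 * N + 1) * t ^ 2 ^ j * wsum w (linkPart (fatFaces sdim d w m t A j) z) := by
  set S := linkPart (fatFaces sdim d w m t A j) z
  have hzN : #z.1 + (j + 1) = N := by grind [sdim]
  have hS x (hx : x ∈ S) : z ≤ x ∧ #x.1 = #z.1 + 1 := by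
    obtain ⟨hx, hzx⟩ := mem_linkPart.1 hx
    have := card_add_of_mem_fatFaces hA hm hx
    exact ⟨hzx, by omega⟩
  have hthin : wsum (linkWeight sdim d w z) S ≤ t ^ 2 ^ j := by
    by_contra! hfat
    exact hz (mem_fatFaces_succ.2 ⟨hzj, hfat.le⟩)
  have hcard : (#z.1 + 2 : ℝ) ≤ 2 ^ N := by
    have := Nat.lt_two_pow_self (n := N)
    exact_mod_cast (by omega : #z.1 + 2 ≤ 2 ^ N)
  have hS0 : 0 ≤ wsum w S := wsum_nonneg (fun x => (hw.pos x).le) S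
  calc ∑ e ∈ linkEdges sdim z S, wsum w (facesAbove sdim (m + 1) e)
      ≤ ∑ e ∈ linkEdges sdim z S, 2 ^ (N + 1) * w e :=
        sum_le_sum fun e _ => wsum_facesAbove_le hK hw e (by omega) hd
    _ = 2 ^ (N + 1) * wsum w (linkEdges sdim z S) := by rw [wsum, mul_sum]
    _ ≤ 2 ^ (N + 1) * ((#z.1 + 2) * t ^ 2 ^ j * wsum w S) := by
        gcongr
        exact wsum_linkEdges_le hK hw hS (hexp j z hzj) hthin
    _ ≤ 2 ^ (N + 1) * (2 ^ N * t ^ 2 ^ j * wsum w S) := by gcongr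
    _ = 2 ^ (2 * N + 1) * t ^ 2 ^ j * wsum w S := by ring

lemma sum_wsum_linkPart_fatFaces_le (hK : IsLowerSet (Kc : Set (Finset ι)))
    (hw : IsProperWeight sdim d w) (hA : ∀ x ∈ A, sdim x = m) (hm : m + 1 = N) (ht : 0 ≤ t)
    (j : ℕ) (Z : Finset (SC Kc)) :
    t ^ 2 ^ j * ∑ z ∈ Z, wsum w (linkPart (fatFaces sdim d w m t A j) z)
      ≤ 2 ^ N * t * wsum w A := by
  have hcount x (hx : x ∈ fatFaces sdim d w m t A j) : #{z ∈ Z | z ≤ x} ≤ 2 ^ N :=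
    (card_filter_le_le_two_pow Z x).trans <| Nat.pow_le_pow_right two_pos <| by
      have := card_add_of_mem_fatFaces hA hm hx
      omega
  have hpow : t ^ 2 ^ j = t * t ^ (2 ^ j - 1) := by
    rw [← pow_succ', Nat.sub_add_cancel Nat.one_le_two_pow]
  calc t ^ 2 ^ j * ∑ z ∈ Z, wsum w (linkPart (fatFaces sdim d w m t A j) z)
      ≤ t ^ 2 ^ j * (2 ^ N * wsum w (fatFaces sdim d w m t A j)) := by
        gcongr
        exact_mod_cast sum_wsum_linkPart_le (fun x => (hw.pos x).le) hcount
    _ = 2 ^ N * t * (t ^ (2 ^ j - 1) * wsum w (fatFaces sdim d w m t A j)) := by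
        rw [hpow]
        ring
    _ ≤ 2 ^ N * t * wsum w A := by
        gcongr
        exact pow_mul_wsum_fatFaces_le hK hw hA hm ht j

lemma badFaces_subset_biUnion (hm : m + 1 = N) :
    badFaces sdim d w m t A ⊆ (range N).biUnion fun j : ℕ =>
      ({z | sdim z = m - (j + 1) ∧ z ∉ fatFaces sdim d w m t A (j + 1)} :
          Finset (SC Kc)).biUnion fun z =>
        (linkEdges sdim z (linkPart (fatFaces sdim d w m t A j) z)).biUnion
          (facesAbove sdim (m + 1)) := by
  intro y hy
  obtain ⟨-, hdim, j, z, hz, hzj, e, he, hey⟩ := mem_filter.1 hy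
  have hj : j < N := by grind [sdim]
  simp only [mem_biUnion, mem_range, mem_filter_univ, mem_facesAbove]
  exact ⟨j, hj, z, ⟨hzj, hz⟩, e, he, hdim, hey⟩

lemma wsum_badFaces_le (hK : IsLowerSet (Kc : Set (Finset ι))) (hw : IsProperWeight sdim d w)
    (hA : ∀ x ∈ A, sdim x = m) (hm : m + 1 = N) (hd : m + 1 ≤ d) (ht : 0 ≤ t)
    (hexp : SkeletonExpandingLinks sdim d w m t) :
    wsum w (badFaces sdim d w m t A) ≤ 2 ^ (4 * N + 1) * t * wsum w A := by
  have hw0 x : 0 ≤ w x := (hw.pos x).le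
  have hA0 : 0 ≤ wsum w A := wsum_nonneg hw0 A
  have hlevel (j : ℕ) (Z : Finset (SC Kc))
      (hZ : ∀ z ∈ Z, sdim z = m - (j + 1) ∧ z ∉ fatFaces sdim d w m t A (j + 1)) :
      ∑ z ∈ Z, wsum w ((linkEdges sdim z (linkPart (fatFaces sdim d w m t A j) z)).biUnion
        (facesAbove sdim (m + 1))) ≤ 2 ^ (3 * N + 1) * t * wsum w A :=
    calc _ ≤ ∑ z ∈ Z, 2 ^ (2 * N + 1) * t ^ 2 ^ j *
            wsum w (linkPart (fatFaces sdim d w m t A j) z) :=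
          sum_le_sum fun z hz => (wsum_biUnion_le hw0 _ _).trans
            (sum_wsum_facesAbove_linkEdges_le hK hw hA hm hd ht hexp (hZ z hz).2 (hZ z hz).1)
      _ = 2 ^ (2 * N + 1) *
            (t ^ 2 ^ j * ∑ z ∈ Z, wsum w (linkPart (fatFaces sdim d w m t A j) z)) := by
          rw [← mul_sum, mul_assoc]
      _ ≤ 2 ^ (2 * N + 1) * (2 ^ N * t * wsum w A) :=
          mul_le_mul_of_nonneg_left (sum_wsum_linkPart_fatFaces_le hK hw hA hm ht j Z)
            (by positivity)
      _ = 2 ^ (3 * N + 1) * t * wsum w A := by ring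
  calc wsum w (badFaces sdim d w m t A)
      ≤ ∑ j ∈ range N, 2 ^ (3 * N + 1) * t * wsum w A :=
        (wsum_mono hw0 (badFaces_subset_biUnion hm)).trans <| (wsum_biUnion_le hw0 _ _).trans <|
          sum_le_sum fun j _ => (wsum_biUnion_le hw0 _ _).trans <|
            hlevel j _ fun z hz => (mem_filter.1 hz).2
    _ = N * (2 ^ (3 * N + 1) * t * wsum w A) := by rw [sum_const, card_range, nsmul_eq_mul]
    _ ≤ 2 ^ N * (2 ^ (3 * N + 1) * t * wsum w A) := by
        gcongr
        exact_mod_cast Nat.lt_two_pow_self.le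
    _ = 2 ^ (4 * N + 1) * t * wsum w A := by ring

lemma exists_le_le_of_covered (hK : IsLowerSet (Kc : Set (Finset ι))) {a b c : SC Kc}
    (hab : a ≠ b) (hdim : sdim a = sdim b) (hac : a ≤ c) (hbc : b ≤ c)
    (hc : sdim c = sdim a + 1) : ∃ z ≤ a, z ≤ b ∧ sdim z = sdim a - 1 := by
  refine ⟨⟨a.1 ∩ b.1, hK inter_subset_left a.2⟩, inter_subset_left, inter_subset_right, ?_⟩
  have hunion : #(a.1 ∪ b.1) ≤ #c.1 := card_le_card (union_subset hac hbc)
  have hinter : #(a.1 ∩ b.1) < #a.1 := by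
    refine card_lt_card (inter_subset_left.ssubset_of_ne fun heq => hab (Subtype.ext ?_))
    exact eq_of_subset_of_card_le (inter_eq_left.1 heq) (by grind [sdim])
  have := card_union_add_card_inter a.1 b.1
  grind [sdim]

lemma exists_mem_fatFaces_le_le (hK : IsLowerSet (Kc : Set (Finset ι))) (hA : ∀ x ∈ A, sdim x = m)
    {y : SC Kc} (hy : sdim y = m + 1) (hybad : y ∉ badFaces sdim d w m t A) {a b c : SC Kc}
    (ha : a ∈ fatFaces sdim d w m t A j) (hb : b ∈ fatFaces sdim d w m t A j) (hab : a ≠ b)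
    (hac : a ≤ c) (hbc : b ≤ c) (hc : sdim c = sdim a + 1) (hcy : c ≤ y) :
    ∃ z ∈ fatFaces sdim d w m t A (j + 1), z ≤ a ∧ z ≤ b := by
  have hadim := dim_of_mem_fatFaces hA ha
  obtain ⟨z, hza, hzb, hz⟩ := exists_le_le_of_covered hK hab
    (hadim.trans (dim_of_mem_fatFaces hA hb).symm) hac hbc hc
  refine ⟨z, ?_, hza, hzb⟩
  by_contra hzfat
  refine hybad (mem_filter.2 ⟨mem_univ y, hy, j, z, hzfat, by omega, c, ?_, hcy⟩)
  exact mem_linkEdges.2 ⟨⟨by omega, hza.trans hac⟩,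
    a, mem_linkPart.2 ⟨ha, hza⟩, b, mem_linkPart.2 ⟨hb, hzb⟩, hab, hac, hbc⟩

lemma FatChain.exists_of_mem_of_notMem_badFaces (hK : IsLowerSet (Kc : Set (Finset ι)))
    (hA : ∀ x ∈ A, sdim x = m) {y : SC Kc} (hy : sdim y = m + 1)
    (hybad : y ∉ badFaces sdim d w m t A) {u x x' : SC Kc} (h : FatChain sdim d w m t A j u x)
    (hxy : x ≤ y) (hx' : x' ∈ A) (hx'y : x' ≤ y) :
    FatChain sdim d w m t A j u x' ∨ ∃ v ≤ u, FatChain sdim d w m t A (j + 1) v x' := by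
  induction h with
  | @single x hx =>
    by_cases hne : x = x'
    · exact .inl (hne ▸ .single hx)
    obtain ⟨z, hz, hzx, hzx'⟩ := exists_mem_fatFaces_le_le hK hA hy hybad (j := 0) hx hx' hne hxy
      hx'y (by rw [hy, hA x hx]) le_rfl
    exact .inr ⟨z, hzx, .cons hz hzx' (.single hx')⟩
  | @cons j u v x hu huv hvx ih =>
    rcases ih hxy with hvx' | ⟨v', hv'v, hv'x'⟩
    · exact .inl (.cons hu huv hvx')
    by_cases hne : u = v'
    · exact .inl (hne ▸ hv'x')
    have hudim := dim_of_mem_fatFaces hA hu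
    have hvdim := dim_of_mem_fatFaces hA hvx.mem_fatFaces
    push_cast at hudim
    obtain ⟨z, hz, hzu, hzv'⟩ := exists_mem_fatFaces_le_le hK hA hy hybad hu hv'x'.mem_fatFaces
      hne huv hv'v (by omega) (hvx.le.trans hxy)
    exact .inr ⟨z, hzu, .cons hz hzv' hv'x'⟩

lemma mem_fatCone_of_notMem_badFaces (hK : IsLowerSet (Kc : Set (Finset ι)))
    (hA : ∀ x ∈ A, sdim x = m) {y : SC Kc} (hy : sdim y = m + 1)
    (hybad : y ∉ badFaces sdim d w m t A) {u x x' : SC Kc}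
    (hu : u ∈ terminalFaces sdim d w m t A j) (hx : x ∈ fatCone sdim d w m t A j u) (hxy : x ≤ y)
    (hx' : x' ∈ A) (hx'y : x' ≤ y) : x' ∈ fatCone sdim d w m t A j u := by
  refine mem_filter.2 ⟨hx', ?_⟩
  rcases (mem_filter.1 hx).2.exists_of_mem_of_notMem_badFaces hK hA hy hybad hxy hx' hx'y with
    h | ⟨v, hvu, hv⟩
  · exact h
  · exact absurd hv.mem_fatFaces ((mem_terminalFaces.1 hu).2 v hvu)

lemma wsum_le_sum_wsum_fatCone (hK : IsLowerSet (Kc : Set (Finset ι)))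
    (hw : IsProperWeight sdim d w) (hA : ∀ x ∈ A, sdim x = m) (hm : m + 1 = N) (ht : 0 ≤ t)
    (hsmall : wsum w A < t ^ (2 ^ N - 1)) :
    wsum w A ≤ ∑ j ∈ range N, ∑ u ∈ terminalFaces sdim d w m t A j,
      wsum w (fatCone sdim d w m t A j u) := by
  have hw0 x : 0 ≤ w x := (hw.pos x).le
  refine le_trans (wsum_mono hw0 fun x hx => ?_) <| (wsum_biUnion_le hw0 (range N) fun j =>
    (terminalFaces sdim d w m t A j).biUnion (fatCone sdim d w m t A j)).trans <|
      sum_le_sum fun j _ => wsum_biUnion_le hw0 _ _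
  obtain ⟨j, hj, u, hu, hux⟩ := exists_terminalFaces_fatChain
    (notMem_fatFaces_of_wsum_lt hK hw hA hm ht hsmall) hx
  simp only [mem_biUnion, mem_range]
  exact ⟨j, hj, u, hu, mem_filter.2 ⟨hx, hux⟩⟩

lemma sum_wsum_terminalFaces_le (hK : IsLowerSet (Kc : Set (Finset ι)))
    (hw : IsProperWeight sdim d w) (hA : ∀ x ∈ A, sdim x = m) (hm : m + 1 = N) (ht : 0 ≤ t)
    (ht1 : t ≤ 1) {q : ℝ} (hq : 2 ^ (N + 1) * q ≤ t ^ (2 ^ N - 1)) :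
    2 * (q * ∑ j ∈ range N, wsum w (terminalFaces sdim d w m t A j)) ≤ wsum w A := by
  have hw0 x : 0 ≤ w x := (hw.pos x).le
  have hlevel j (hj : j ∈ range N) :
      2 ^ N * (2 * (q * wsum w (terminalFaces sdim d w m t A j))) ≤ wsum w A := by
    have hpow : 2 ^ (N + 1) * q ≤ t ^ (2 ^ j - 1) := hq.trans <|
      pow_le_pow_of_le_one ht ht1 <| Nat.sub_le_sub_right
        (Nat.pow_le_pow_right two_pos (mem_range.1 hj).le) 1
    calc 2 ^ N * (2 * (q * wsum w (terminalFaces sdim d w m t A j)))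
        = 2 ^ (N + 1) * q * wsum w (terminalFaces sdim d w m t A j) := by ring
      _ ≤ t ^ (2 ^ j - 1) * wsum w (fatFaces sdim d w m t A j) :=
          mul_le_mul hpow (wsum_mono hw0 fun u hu => (mem_terminalFaces.1 hu).1)
            (wsum_nonneg hw0 _) (by positivity)
      _ ≤ wsum w A := pow_mul_wsum_fatFaces_le hK hw hA hm ht j
  have hsum := sum_le_sum hlevel
  rw [← mul_sum, ← mul_sum, ← mul_sum, sum_const, card_range, nsmul_eq_mul] at hsum
  have hN : (N : ℝ) ≤ 2 ^ N := by exact_mod_cast Nat.lt_two_pow_self.le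
  exact le_of_mul_le_mul_left
    (hsum.trans (mul_le_mul_of_nonneg_right hN (wsum_nonneg hw0 A))) (by positivity)

lemma sum_wsum_linkPart_badFaces_le (hw : IsProperWeight sdim d w) (hm : m + 1 = N) :
    ∑ j ∈ range N, ∑ u ∈ terminalFaces sdim d w m t A j,
        wsum w (linkPart (badFaces sdim d w m t A) u)
      ≤ 2 ^ (2 * N + 1) * wsum w (badFaces sdim d w m t A) := by
  have hw0 x : 0 ≤ w x := (hw.pos x).le
  have hcount (U : Finset (SC Kc)) y (hy : y ∈ badFaces sdim d w m t A) :
      #{u ∈ U | u ≤ y} ≤ 2 ^ (N + 1) :=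
    (card_filter_le_le_two_pow U y).trans <| Nat.pow_le_pow_right two_pos <| by
      have := (mem_filter.1 hy).2.1
      grind [sdim]
  have hbad0 := wsum_nonneg hw0 (badFaces sdim d w m t A)
  calc _ ≤ ∑ j ∈ range N, 2 ^ (N + 1) * wsum w (badFaces sdim d w m t A) :=
        sum_le_sum fun j _ => by exact_mod_cast sum_wsum_linkPart_le hw0 (hcount _)
    _ = N * (2 ^ (N + 1) * wsum w (badFaces sdim d w m t A)) := by
        rw [sum_const, card_range, nsmul_eq_mul]
    _ ≤ 2 ^ N * (2 ^ (N + 1) * wsum w (badFaces sdim d w m t A)) := by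
        gcongr
        exact_mod_cast Nat.lt_two_pow_self.le
    _ = 2 ^ (2 * N + 1) * wsum w (badFaces sdim d w m t A) := by ring

lemma eq_empty_of_terminalFaces_expand (hK : IsLowerSet (Kc : Set (Finset ι)))
    (hw : IsProperWeight sdim d w) (hA : ∀ x ∈ A, sdim x = m) (hm : m + 1 = N) (hd : m + 1 ≤ d)
    {ε q : ℝ} (ht : 0 < t) (ht1 : t ≤ 1) (hε : 64 ^ (N + 1) * t ≤ ε)
    (hq : 2 ^ (N + 1) * q ≤ t ^ (2 ^ N - 1)) (hlinks : SkeletonExpandingLinks sdim d w m t)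
    (hsmall : wsum w A < t ^ (2 ^ N - 1))
    (hterm : ∀ j < N, ∀ u ∈ terminalFaces sdim d w m t A j,
      ε * (wsum w (fatCone sdim d w m t A j u) - q * w u)
        ≤ wsum w (linkPart (badFaces sdim d w m t A) u)) :
    A = ∅ := by
  have hε0 : 0 < ε := (by positivity : 0 < 64 ^ (N + 1) * t).trans_le hε
  have hcones := wsum_le_sum_wsum_fatCone hK hw hA hm ht.le hsmall
  have hterminal := sum_wsum_terminalFaces_le hK hw hA hm ht.le ht1 hq
  have hsum := sum_le_sum fun j hj => sum_le_sum (hterm j (mem_range.1 hj))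
  simp only [← mul_sum, sum_sub_distrib] at hsum
  have hhalf : ε * (wsum w A / 2) ≤ 2 ^ (6 * N + 2) * t * wsum w A :=
    calc ε * (wsum w A / 2)
        ≤ ε * (∑ j ∈ range N, ∑ u ∈ terminalFaces sdim d w m t A j,
            wsum w (fatCone sdim d w m t A j u)
          - q * ∑ j ∈ range N, wsum w (terminalFaces sdim d w m t A j)) := by
          gcongr
          linarith
      _ ≤ 2 ^ (2 * N + 1) * wsum w (badFaces sdim d w m t A) :=
          hsum.trans (sum_wsum_linkPart_badFaces_le hw hm)
      _ ≤ 2 ^ (2 * N + 1) * (2 ^ (4 * N + 1) * t * wsum w A) := by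
          gcongr
          exact wsum_badFaces_le hK hw hA hm hd ht.le hlinks
      _ = 2 ^ (6 * N + 2) * t * wsum w A := by ring
  refine eq_empty_of_forall_notMem fun x hx => ?_
  have hApos : 0 < wsum w A :=
    (hw.pos x).trans_le (single_le_sum (f := w) (fun x _ => (hw.pos x).le) hx)
  have hconst : (64 : ℝ) ^ (N + 1) = 16 * 2 ^ (6 * N + 2) := by
    rw [show (64 : ℝ) = 2 ^ 6 by norm_num, ← pow_mul]
    ring
  have hεA := mul_le_mul_of_nonneg_right hε hApos.le
  have hpos : 0 < 2 ^ (6 * N + 2) * t * wsum w A := by positivity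
  rw [hconst] at hεA
  linarith

end SimplicialFatFaces

section CochainNorm

variable {V : Type*} [Fintype V] {dim : V → ℤ} {F : V → Type*} [∀ x, AddCommGroup (F x)]
  {w : V → ℝ} {i : ℤ}

/-- The support of a cochain, as a set of faces of the whole poset. -/
def supp (f : Cochain dim F i) : Finset V :=
  ({x | f x ≠ 0} : Finset {x : V // dim x = i}).map (.subtype _)

lemma mem_supp {f : Cochain dim F i} {x : V} : x ∈ supp f ↔ ∃ h : dim x = i, f ⟨x, h⟩ ≠ 0 := by
  simp [supp]

lemma supp_eq_empty_iff {f : Cochain dim F i} : supp f = ∅ ↔ f = 0 := by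
  simp [supp, filter_eq_empty_iff, funext_iff]

lemma cnorm_eq_wsum_supp (f : Cochain dim F i) : cnorm dim F w f = wsum w (supp f) := by
  simp only [cnorm, wsum, supp, sum_map, ← sum_filter, Function.Embedding.subtype_apply]

lemma cnorm_nonneg (hw : ∀ x, 0 ≤ w x) (f : Cochain dim F i) : 0 ≤ cnorm dim F w f :=
  cnorm_eq_wsum_supp f ▸ wsum_nonneg hw _

lemma cnorm_zero : cnorm dim F w (0 : Cochain dim F i) = 0 := by
  simp [cnorm]

lemma cnorm_neg (f : Cochain dim F i) : cnorm dim F w (-f) = cnorm dim F w f := by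
  simp [cnorm]

lemma cnorm_add_le (hw : ∀ x, 0 ≤ w x) (f g : Cochain dim F i) :
    cnorm dim F w (f + g) ≤ cnorm dim F w f + cnorm dim F w g := by
  rw [cnorm, cnorm, cnorm, ← sum_add_distrib]
  refine sum_le_sum fun x _ => ?_
  have := hw x.1
  have hadd : f x = 0 → g x = 0 → (f + g) x = 0 := fun hf hg => by simp [hf, hg]
  split_ifs <;> first | linarith | tauto

lemma distTo_le_cnorm_sub (hw : ∀ x, 0 ≤ w x) {f g : Cochain dim F i} {S : Set (Cochain dim F i)}
    (hg : g ∈ S) : distTo dim F w f S ≤ cnorm dim F w (f - g) :=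
  csInf_le ⟨0, Set.forall_mem_image.2 fun _ _ => cnorm_nonneg hw _⟩ ⟨g, hg, rfl⟩

end CochainNorm

section LinkExtension

variable {V : Type*} [PartialOrder V] {dim : V → ℤ} {F : V → Type*} [∀ x, AddCommGroup (F x)]
  {i : ℤ} {u : V}

lemma extendByZero_sub (b c : LCochain dim F u i) :
    extendByZero dim F u (b - c) = extendByZero dim F u b - extendByZero dim F u c := by
  funext x
  by_cases hx : u ≤ x.1 <;> simp [extendByZero, hx]

lemma extendByZero_neg (b : LCochain dim F u i) :
    extendByZero dim F u (-b) = -extendByZero dim F u b := by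
  funext x
  by_cases hx : u ≤ x.1 <;> simp [extendByZero, hx]

/-- The part of `f` supported on `S`, as a cochain on the link of `u`. -/
def linkRestrict (S : Finset V) (u : V) (f : Cochain dim F i) : LCochain dim F u i := fun x =>
  if x.1 ∈ S then f ⟨x.1, x.2.1⟩ else 0

lemma extendByZero_linkRestrict_apply {S : Finset V} (hS : ∀ x ∈ S, u ≤ x) (f : Cochain dim F i)
    (x : {x : V // dim x = i}) :
    extendByZero dim F u (linkRestrict S u f) x = if x.1 ∈ S then f x else 0 := by
  by_cases hx : u ≤ x.1
  · simp [extendByZero, linkRestrict, hx]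
  · simp [extendByZero, hx, mt (hS x.1) hx]

lemma extendByZero_linkRestrict_of_mem {S : Finset V} (hS : ∀ x ∈ S, u ≤ x) (f : Cochain dim F i)
    {x : {x : V // dim x = i}} (hx : x.1 ∈ S) :
    extendByZero dim F u (linkRestrict S u f) x = f x := by
  rw [extendByZero_linkRestrict_apply hS, if_pos hx]

lemma extendByZero_linkRestrict_of_notMem {S : Finset V} (hS : ∀ x ∈ S, u ≤ x)
    (f : Cochain dim F i) {x : {x : V // dim x = i}} (hx : x.1 ∉ S) :
    extendByZero dim F u (linkRestrict S u f) x = 0 := by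
  rw [extendByZero_linkRestrict_apply hS, if_neg hx]

end LinkExtension

section Cochains

variable {V : Type*} [Fintype V] [PartialOrder V] {R : Type*} [CommRing R] {dim : V → ℤ}
  {F : V → Type*} [∀ x, AddCommGroup (F x)] [∀ x, Module R (F x)] {sgn : V → V → R}
  {res : ∀ x y : V, x ≤ y → (F x →ₗ[R] F y)} {w : V → ℝ} {d i j m : ℤ} {u : V}

lemma sum_link_eq_sum {M : Type*} [AddCommMonoid M] (φ : {x : V // dim x = i} → M)
    (hφ : ∀ x, ¬u ≤ x.1 → φ x = 0) :
    ∑ x : {x : V // dim x = i ∧ u ≤ x}, φ ⟨x.1, x.2.1⟩ = ∑ x, φ x :=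
  Fintype.sum_of_injective (Subtype.map id fun _ hx => hx.1)
    (Subtype.map_injective _ Function.injective_id) _ _
    (fun x hx => hφ x fun hux => hx ⟨⟨x.1, x.2, hux⟩, rfl⟩) fun _ => rfl

lemma coboundary_add (f g : Cochain dim F i) : coboundary dim F sgn res i j (f + g) =
    coboundary dim F sgn res i j f + coboundary dim F sgn res i j g := by
  funext y
  simp only [coboundary, Pi.add_apply, ← sum_add_distrib]
  refine sum_congr rfl fun x _ => ?_
  split_ifs <;> simp

lemma coboundary_zero : coboundary dim F sgn res i j 0 = 0 :=
  map_zero (AddMonoidHom.mk' (coboundary dim F sgn res i j) coboundary_add)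

lemma coboundary_neg (f : Cochain dim F i) :
    coboundary dim F sgn res i j (-f) = -coboundary dim F sgn res i j f :=
  map_neg (AddMonoidHom.mk' (coboundary dim F sgn res i j) coboundary_add) f

lemma coboundary_apply_congr {f g : Cochain dim F i} {y : {y : V // dim y = j}}
    (hfg : ∀ x : {x : V // dim x = i}, x.1 ≤ y.1 → f x = g x) :
    coboundary dim F sgn res i j f y = coboundary dim F sgn res i j g y := by
  refine sum_congr rfl fun x _ => ?_
  split_ifs with hxy
  · rw [hfg x hxy]
  · rfl

lemma coboundary_extendByZero (b : LCochain dim F u i) :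
    coboundary dim F sgn res i j (extendByZero dim F u b) =
      extendByZero dim F u (lcoboundary dim F sgn res u i j b) := by
  funext y
  by_cases huy : u ≤ y.1
  · rw [coboundary, ← sum_link_eq_sum (u := u) _ fun x hx => by simp [extendByZero, hx]]
    simp only [extendByZero, lcoboundary, dif_pos huy]
    exact sum_congr rfl fun x _ => by simp only [dif_pos x.2.2]
  · simp only [coboundary, extendByZero, dif_neg huy]
    refine sum_eq_zero fun x _ => ?_
    split_ifs with hxy hux
    · exact absurd (hux.trans hxy) huy
    · simp
    · rfl

lemma sum_orientation_eq_zero (hdim : StrictMono dim) (ho : IsOrientation R dim sgn) {x z : V}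
    (hxz : x ≤ z) (hx : j = dim x + 1) (hz : dim z = j + 1) :
    ∑ y : {y : V // dim y = j}, (if x ≤ y.1 ∧ y.1 ≤ z then sgn z y.1 * sgn y.1 x else 0) = 0 := by
  refine Eq.trans ?_ (ho.sum_eq_zero hxz (by omega))
  rw [← sum_subtype {y : V | dim y = j} (by simp)
    fun y => (if x ≤ y ∧ y ≤ z then sgn z y * sgn y x else 0), ← sum_filter, filter_filter]
  refine sum_congr (ext fun y => ?_) fun _ _ => rfl
  simp only [mem_filter_univ]
  constructor
  · rintro ⟨hy, hxy, hyz⟩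
    exact ⟨hxy.lt_of_ne (by rintro rfl; omega), hyz.lt_of_ne (by rintro rfl; omega)⟩
  · rintro ⟨hxy, hyz⟩
    have := hdim hxy
    have := hdim hyz
    exact ⟨by omega, hxy.le, hyz.le⟩

lemma coboundary_coboundary (hdim : StrictMono dim) (ho : IsOrientation R dim sgn)
    (hres : IsSheafRes R F res) (hij : j = i + 1) (hjm : m = j + 1) (f : Cochain dim F i) :
    coboundary dim F sgn res j m (coboundary dim F sgn res i j f) = 0 := by
  funext z
  have hexpand (y : {y : V // dim y = j}) :
      (if h : y.1 ≤ z.1 then sgn z.1 y.1 • res y.1 z.1 h (coboundary dim F sgn res i j f y) else 0)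
        = ∑ x : {x : V // dim x = i}, if h : x.1 ≤ y.1 ∧ y.1 ≤ z.1 then
            (sgn z.1 y.1 * sgn y.1 x.1) • res x.1 z.1 (h.1.trans h.2) (f x) else 0 := by
    by_cases hyz : y.1 ≤ z.1
    · simp only [dif_pos hyz, coboundary, map_sum, smul_sum]
      refine sum_congr rfl fun x _ => ?_
      by_cases hxy : x.1 ≤ y.1
      · simp [hxy, hyz, smul_smul, ← hres.trans hxy hyz]
      · simp [hxy]
    · simp [hyz]
  rw [coboundary, sum_congr rfl fun y _ => hexpand y, sum_comm]
  refine sum_eq_zero fun x _ => ?_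
  by_cases hxz : x.1 ≤ z.1
  · calc _ = ∑ y : {y : V // dim y = j},
          (if x.1 ≤ y.1 ∧ y.1 ≤ z.1 then sgn z.1 y.1 * sgn y.1 x.1 else 0) •
            res x.1 z.1 hxz (f x) :=
          sum_congr rfl fun y _ => by split_ifs <;> simp
      _ = 0 := by
          rw [← sum_smul, sum_orientation_eq_zero hdim ho hxz (by rw [x.2, hij])
            (by rw [z.2, hjm]), zero_smul]
  · exact sum_eq_zero fun y _ => dif_neg fun h => hxz (h.1.trans h.2)

lemma lnorm_eq_cnorm_extendByZero (b : LCochain dim F u i) :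
    lnorm dim F w d u b = cnorm dim F (linkWeight dim d w u) (extendByZero dim F u b) := by
  rw [lnorm, cnorm, ← sum_link_eq_sum (u := u) _ fun x hx => by simp [extendByZero, hx]]
  exact sum_congr rfl fun x _ => by simp only [extendByZero, dif_pos x.2.2]

lemma supp_extendByZero_subset (b : LCochain dim F u i) :
    supp (extendByZero dim F u b) ⊆ facesAbove dim i u := by
  intro x hx
  obtain ⟨hxi, hx⟩ := mem_supp.1 hx
  exact mem_facesAbove.2 ⟨hxi, of_not_not fun hux => hx (dif_neg hux)⟩

lemma cnorm_extendByZero_le (hw : ∀ x, 0 ≤ w x) (b : LCochain dim F u i) :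
    cnorm dim F w (extendByZero dim F u b) ≤ wsum w (facesAbove dim i u) := by
  rw [cnorm_eq_wsum_supp]
  exact wsum_mono hw (supp_extendByZero_subset b)

lemma cnorm_extendByZero_linkRestrict {S : Finset V} (hS : ∀ x ∈ S, u ≤ x)
    {f : Cochain dim F i} (hSf : S ⊆ supp f) :
    cnorm dim F w (extendByZero dim F u (linkRestrict S u f)) = wsum w S := by
  rw [cnorm_eq_wsum_supp]
  congr 1
  ext x
  rw [mem_supp]
  constructor
  · rintro ⟨h, hx⟩
    by_contra hxS
    exact hx (extendByZero_linkRestrict_of_notMem hS f hxS)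
  · intro hx
    obtain ⟨h, hfx⟩ := mem_supp.1 (hSf hx)
    exact ⟨h, by rwa [extendByZero_linkRestrict_of_mem hS f hx]⟩

lemma cnorm_eq_cnorm_sub_add_cnorm_linkRestrict {S : Finset V} (hS : ∀ x ∈ S, u ≤ x)
    (f : Cochain dim F i) :
    cnorm dim F w f = cnorm dim F w (f - extendByZero dim F u (linkRestrict S u f))
      + cnorm dim F w (extendByZero dim F u (linkRestrict S u f)) := by
  rw [cnorm, cnorm, cnorm, ← sum_add_distrib]
  refine sum_congr rfl fun x _ => ?_
  rw [Pi.sub_apply, extendByZero_linkRestrict_apply hS]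
  by_cases hx : x.1 ∈ S <;> simp [hx]

lemma MockMinAt.le_cnorm_sub {q : ℝ} {f : Cochain dim F m}
    (hf : MockMinAt dim F sgn res w q m f u) (hw : ∀ x, 0 ≤ w x) {S : Finset V}
    (hS : ∀ x ∈ S, u ≤ x) (b : LCochain dim F u (m - 1)) :
    cnorm dim F w (extendByZero dim F u (linkRestrict S u f)) - q * w u ≤
      cnorm dim F w (extendByZero dim F u
        (linkRestrict S u f - lcoboundary dim F sgn res u (m - 1) m b)) := by
  set g := linkRestrict S u f
  set δb := lcoboundary dim F sgn res u (m - 1) m b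
  have hmin : cnorm dim F w f ≤ cnorm dim F w (f - extendByZero dim F u δb) + q * w u := by
    have := hf (-b)
    rwa [← coboundary_extendByZero, extendByZero_neg, coboundary_neg, coboundary_extendByZero,
      ← sub_eq_add_neg] at this
  have hsplit := cnorm_eq_cnorm_sub_add_cnorm_linkRestrict (w := w) hS f
  have htri := cnorm_add_le hw (f - extendByZero dim F u g) (extendByZero dim F u (g - δb))
  rw [extendByZero_sub, sub_add_sub_cancel] at htri
  rw [extendByZero_sub]
  linarith

lemma exists_cnorm_add_coboundary_minimizer (f : Cochain dim F j) (c : ℝ) :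
    ∃ h : Cochain dim F i, ∀ h' : Cochain dim F i,
      cnorm dim F w (f + coboundary dim F sgn res i j h) + c * cnorm dim F w h ≤
        cnorm dim F w (f + coboundary dim F sgn res i j h') + c * cnorm dim F w h' := by
  obtain ⟨_, ⟨h, rfl⟩, hmin⟩ := Set.exists_min_image
    (Set.range fun h : Cochain dim F i => (supp (f + coboundary dim F sgn res i j h), supp h))
    (fun S => wsum w S.1 + c * wsum w S.2) (Set.toFinite _) (Set.range_nonempty _)
  refine ⟨h, fun h' => ?_⟩
  simp only [cnorm_eq_wsum_supp]
  exact hmin _ ⟨h', rfl⟩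

lemma mockMinAt_of_minimizer (hw : ∀ x, 0 ≤ w x) {c q : ℝ} (hc : 0 ≤ c) {f : Cochain dim F m}
    {h : Cochain dim F (m - 1)}
    (hh : ∀ h', cnorm dim F w (f + coboundary dim F sgn res (m - 1) m h) + c * cnorm dim F w h ≤
      cnorm dim F w (f + coboundary dim F sgn res (m - 1) m h') + c * cnorm dim F w h')
    (hu : c * wsum w (facesAbove dim (m - 1) u) ≤ q * w u) :
    MockMinAt dim F sgn res w q m (f + coboundary dim F sgn res (m - 1) m h) u := by
  intro b
  have hmin := hh (h + extendByZero dim F u b)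
  rw [coboundary_add, coboundary_extendByZero, ← add_assoc] at hmin
  have htri := mul_le_mul_of_nonneg_left (cnorm_add_le hw h (extendByZero dim F u b)) hc
  have hb := mul_le_mul_of_nonneg_left (cnorm_extendByZero_le hw b) hc
  linarith

end Cochains

section SimplicialCochains

variable {ι : Type} {Kc : Finset (Finset ι)} {R : Type*} [CommRing R] {F : SC Kc → Type*}
  [∀ x, AddCommGroup (F x)] [∀ x, Module R (F x)] {sgn : SC Kc → SC Kc → R}
  {res : ∀ x y : SC Kc, x ≤ y → (F x →ₗ[R] F y)} {w : SC Kc → ℝ} {d i m : ℤ} {t ε q c : ℝ}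
  {N : ℕ}

lemma cnorm_extendByZero_eq (hK : IsLowerSet (Kc : Set (Finset ι))) (hw : IsProperWeight sdim d w)
    {u : SC Kc} {n : ℕ} (hi : i + 1 = n) (hu : #u.1 ≤ n) (b : LCochain sdim F u i) :
    cnorm sdim F w (extendByZero sdim F u b) = n.choose #u.1 * w u * lnorm sdim F w d u b := by
  rw [lnorm_eq_cnorm_extendByZero, cnorm_eq_wsum_supp, cnorm_eq_wsum_supp,
    wsum_eq_wsum_linkWeight hK hw (fun x hx => ?_) hu]
  obtain ⟨hx, hux⟩ := mem_facesAbove.1 (supp_extendByZero_subset b hx)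
  exact ⟨hux, by grind [sdim]⟩

lemma LinkCbeGe.mul_le_cnorm (hK : IsLowerSet (Kc : Set (Finset ι)))
    (hw : IsProperWeight sdim d w) (hm : m + 1 = N) {u : SC Kc} (hu : sdim u ≤ m) (hε : 0 ≤ ε)
    (hcbe : LinkCbeGe sdim F sgn res w d u m ε) {g : LCochain sdim F u m} {a : ℝ}
    (ha : ∀ b, a ≤ cnorm sdim F w (extendByZero sdim F u
      (g - lcoboundary sdim F sgn res u (m - 1) m b))) :
    ε * a ≤ cnorm sdim F w (extendByZero sdim F u (lcoboundary sdim F sgn res u m (m + 1) g)) := by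
  have huN : #u.1 ≤ N := by grind [sdim]
  have hwu := hw.pos u
  have hchoose : (0 : ℝ) < N.choose #u.1 := by exact_mod_cast Nat.choose_pos huN
  have hdist : a / (N.choose #u.1 * w u) ≤
      sInf ((fun b => lnorm sdim F w d u (g - b)) '' lcoboundariesSet sdim F sgn res u m) := by
    refine le_csInf (Set.Nonempty.image _ ⟨_, 0, rfl⟩) ?_
    rintro _ ⟨_, ⟨b, rfl⟩, rfl⟩
    rw [div_le_iff₀' (by positivity), ← cnorm_extendByZero_eq hK hw hm huN]
    exact ha b
  have hlnorm : 0 ≤ lnorm sdim F w d u (lcoboundary sdim F sgn res u m (m + 1) g) := by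
    rw [lnorm_eq_cnorm_extendByZero]
    exact cnorm_nonneg (linkWeight_nonneg (fun x => (hw.pos x).le) u) _
  rw [cnorm_extendByZero_eq hK hw (n := N + 1) (by push_cast; omega) (by omega)]
  calc ε * a = N.choose #u.1 * w u * (ε * (a / (N.choose #u.1 * w u))) := by field_simp
    _ ≤ N.choose #u.1 * w u * lnorm sdim F w d u (lcoboundary sdim F sgn res u m (m + 1) g) := by
        gcongr
        exact (mul_le_mul_of_nonneg_left hdist hε).trans (hcbe g)
    _ ≤ (N + 1).choose #u.1 * w u *
          lnorm sdim F w d u (lcoboundary sdim F sgn res u m (m + 1) g) := by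
        gcongr
        exact N.le_succ

lemma supp_lcoboundary_linkRestrict_fatCone_subset (hK : IsLowerSet (Kc : Set (Finset ι)))
    {f : Cochain sdim F m} (hf : f ∈ cocycles sdim F sgn res m) {j : ℕ} {u : SC Kc}
    (hu : u ∈ terminalFaces sdim d w m t (supp f) j) :
    supp (extendByZero sdim F u (lcoboundary sdim F sgn res u m (m + 1)
        (linkRestrict (fatCone sdim d w m t (supp f) j u) u f)))
      ⊆ linkPart (badFaces sdim d w m t (supp f)) u := by
  intro y hy
  obtain ⟨hym, huy⟩ := mem_facesAbove.1 (supp_extendByZero_subset _ hy)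
  refine mem_linkPart.2 ⟨of_not_not fun hbad => ?_, huy⟩
  obtain ⟨_, hy⟩ := mem_supp.1 hy
  rw [← coboundary_extendByZero] at hy
  have hcone x (hx : x ∈ fatCone sdim d w m t (supp f) j u) : u ≤ x := (mem_filter.1 hx).2.le
  by_cases hx : ∃ x ∈ fatCone sdim d w m t (supp f) j u, x ≤ y
  · obtain ⟨x, hx, hxy⟩ := hx
    refine hy <| (coboundary_apply_congr fun x' hx'y => ?_).trans (congrFun hf ⟨y, hym⟩)
    by_cases hx' : x'.1 ∈ fatCone sdim d w m t (supp f) j u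
    · exact extendByZero_linkRestrict_of_mem hcone f hx'
    · rw [extendByZero_linkRestrict_of_notMem hcone f hx']
      refine Eq.symm (of_not_not fun hfx' => hx' ?_)
      exact mem_fatCone_of_notMem_badFaces hK (fun x hx => (mem_supp.1 hx).1) hym hbad hu hx hxy
        (mem_supp.2 ⟨x'.2, hfx'⟩) hx'y
  · refine hy <| (coboundary_apply_congr (g := 0) fun x' hx'y => ?_).trans
      (congrFun coboundary_zero _)
    exact extendByZero_linkRestrict_of_notMem hcone f fun hx' => hx ⟨x'.1, hx', hx'y⟩

lemma eq_zero_of_mockMin (hK : IsLowerSet (Kc : Set (Finset ι))) (hw : IsProperWeight sdim d w)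
    (hm : m + 1 = N) (hd : m + 1 ≤ d) (ht : 0 < t) (ht1 : t ≤ 1) (hε : 64 ^ (N + 1) * t ≤ ε)
    (hq : 2 ^ (N + 1) * q ≤ t ^ (2 ^ N - 1)) (hlinks : SkeletonExpandingLinks sdim d w m t)
    (hcbe : ∀ u : SC Kc, 0 ≤ sdim u → sdim u ≤ m → LinkCbeGe sdim F sgn res w d u m ε)
    {f : Cochain sdim F m} (hf : f ∈ cocycles sdim F sgn res m)
    (hmin : MockMin sdim F sgn res w q m f) (hsmall : cnorm sdim F w f < t ^ (2 ^ N - 1)) :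
    f = 0 := by
  have hw0 x : 0 ≤ w x := (hw.pos x).le
  have hε0 : 0 ≤ ε := (by positivity : 0 ≤ 64 ^ (N + 1) * t).trans hε
  have hsupp x (hx : x ∈ supp f) : sdim x = m := (mem_supp.1 hx).1
  rw [cnorm_eq_wsum_supp] at hsmall
  refine supp_eq_empty_iff.1 <| eq_empty_of_terminalFaces_expand hK hw hsupp hm hd ht ht1 hε hq
    hlinks hsmall fun j hj u hu => ?_
  have hudim := dim_of_mem_fatFaces hsupp (mem_terminalFaces.1 hu).1
  have hcone x (hx : x ∈ fatCone sdim d w m t (supp f) j u) : u ≤ x := (mem_filter.1 hx).2.le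
  rw [← cnorm_extendByZero_linkRestrict hcone fun x hx => (mem_filter.1 hx).1]
  have hu0 : 0 ≤ sdim u := by omega
  have hum : sdim u ≤ m := by omega
  refine (LinkCbeGe.mul_le_cnorm hK hw hm hum hε0 (hcbe u hu0 hum)
    ((hmin u hu0 hum).le_cnorm_sub hw0 hcone)).trans ?_
  rw [cnorm_eq_wsum_supp]
  exact wsum_mono hw0 (supp_lcoboundary_linkRestrict_fatCone_subset hK hf hu)

lemma exists_mockMin_add_coboundary (hK : IsLowerSet (Kc : Set (Finset ι)))
    (hw : IsProperWeight sdim d w) (him : i + 1 = m) (hm : m ≤ N) (hd : i ≤ d) (hc : 0 ≤ c)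
    (f : Cochain sdim F m) :
    ∃ h : Cochain sdim F i,
      MockMin sdim F sgn res w (c * 2 ^ N) m (f + coboundary sdim F sgn res i m h) ∧
      cnorm sdim F w (f + coboundary sdim F sgn res i m h) + c * cnorm sdim F w h
        ≤ cnorm sdim F w f := by
  obtain rfl : i = m - 1 := by omega
  have hw0 x : 0 ≤ w x := (hw.pos x).le
  obtain ⟨h, hh⟩ := exists_cnorm_add_coboundary_minimizer (w := w) (sgn := sgn) (res := res)
    (i := m - 1) f c
  refine ⟨h, fun u _ _ => mockMinAt_of_minimizer hw0 hc hh ?_, ?_⟩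
  · rw [mul_assoc]
    exact mul_le_mul_of_nonneg_left (wsum_facesAbove_le hK hw u (by omega) hd) hc
  · simpa [coboundary_zero, cnorm_zero] using hh 0

lemma cnorm_le_one (hK : IsLowerSet (Kc : Set (Finset ι))) (hw : IsProperWeight sdim d w)
    (hempty : ∅ ∈ Kc) (hi : i + 1 = N) (hd : i ≤ d) (f : Cochain sdim F i) :
    cnorm sdim F w f ≤ 1 := by
  rw [← wsum_faces hK hw (z := ⟨∅, hempty⟩) rfl hi hd, cnorm_eq_wsum_supp]
  exact wsum_mono (fun x => (hw.pos x).le) fun x hx => mem_filter.2 ⟨mem_univ x, (mem_supp.1 hx).1⟩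

lemma mul_distTo_cocycles_le_cnorm_coboundary (hK : IsLowerSet (Kc : Set (Finset ι)))
    (hempty : ∅ ∈ Kc) (hw : IsProperWeight sdim d w) (ho : IsOrientation R sdim sgn)
    (hres : IsSheafRes R F res) (hi : i + 2 = N) (hi0 : -1 ≤ i) (hd : i + 2 ≤ d) (ht : 0 < t)
    (ht1 : t ≤ 1) (hε : 64 ^ (N + 1) * t ≤ ε)
    (hlinks : SkeletonExpandingLinks sdim d w (i + 1) t)
    (hcbe : ∀ u : SC Kc, 0 ≤ sdim u → sdim u ≤ i + 1 →
      LinkCbeGe sdim F sgn res w d u (i + 1) ε) (f : Cochain sdim F i) :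
    (2 * 4 ^ N)⁻¹ * t ^ (2 ^ N - 1) * distTo sdim F w f (cocycles sdim F sgn res i)
      ≤ cnorm sdim F w (coboundary sdim F sgn res i (i + 1) f) := by
  have hw0 x : 0 ≤ w x := (hw.pos x).le
  set c : ℝ := (2 * 4 ^ N)⁻¹ * t ^ (2 ^ N - 1) with hc
  have hc0 : 0 < c := by positivity
  rcases le_or_gt (t ^ (2 ^ N - 1)) (cnorm sdim F w (coboundary sdim F sgn res i (i + 1) f)) with
    hlarge | hsmall
  · have hzero : (0 : Cochain sdim F i) ∈ cocycles sdim F sgn res i := coboundary_zero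
    have hdist : distTo sdim F w f (cocycles sdim F sgn res i) ≤ 1 :=
      (distTo_le_cnorm_sub hw0 hzero).trans <|
        cnorm_le_one hK hw hempty (N := N - 1) (by omega) (by omega) (f - 0)
    have hct : c ≤ t ^ (2 ^ N - 1) :=
      mul_le_of_le_one_left (by positivity) (inv_le_one_of_one_le₀ (by
        have := one_le_pow₀ (n := N) (by norm_num : (1 : ℝ) ≤ 4)
        linarith))
    exact (mul_le_of_le_one_right hc0.le hdist).trans (hct.trans hlarge)
  · obtain ⟨h, hmin, hle⟩ := exists_mockMin_add_coboundary (N := N) (sgn := sgn) (res := res) hK hw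
      rfl (by omega) (by omega) hc0.le (coboundary sdim F sgn res i (i + 1) f)
    have hq : 2 ^ (N + 1) * (c * 2 ^ N) ≤ t ^ (2 ^ N - 1) := le_of_eq <| by
      rw [hc, show (4 : ℝ) = 2 * 2 by norm_num, mul_pow]
      field_simp
      ring
    have hch : 0 ≤ c * cnorm sdim F w h := mul_nonneg hc0.le (cnorm_nonneg hw0 h)
    rw [← coboundary_add] at hmin hle
    have hcocycle : coboundary sdim F sgn res i (i + 1) (f + h) = 0 :=
      eq_zero_of_mockMin hK hw (by omega) (by omega) ht ht1 hε hq hlinks hcbe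
        (coboundary_coboundary sdim_strictMono ho hres rfl rfl _) hmin (by linarith)
    have hdist := distTo_le_cnorm_sub hw0 (f := f) (S := cocycles sdim F sgn res i) hcocycle
    rw [sub_add_cancel_left, cnorm_neg] at hdist
    rw [hcocycle, cnorm_zero, zero_add] at hle
    exact (mul_le_mul_of_nonneg_left hdist hc0.le).trans hle

lemma pow_le_cnorm_of_notMem_coboundariesSet (hK : IsLowerSet (Kc : Set (Finset ι)))
    (hw : IsProperWeight sdim d w) (ho : IsOrientation R sdim sgn) (hres : IsSheafRes R F res)
    (hm : m + 1 = N) (hd : m + 1 ≤ d) (ht : 0 < t) (ht1 : t ≤ 1) (hε : 64 ^ (N + 1) * t ≤ ε)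
    (hlinks : SkeletonExpandingLinks sdim d w m t)
    (hcbe : ∀ u : SC Kc, 0 ≤ sdim u → sdim u ≤ m → LinkCbeGe sdim F sgn res w d u m ε)
    {f : Cochain sdim F m} (hf : f ∈ cocycles sdim F sgn res m)
    (hfB : f ∉ coboundariesSet sdim F sgn res m) : t ^ (2 ^ N - 1) ≤ cnorm sdim F w f := by
  by_contra! hsmall
  obtain ⟨h, hmin, hle⟩ := exists_mockMin_add_coboundary (N := N) (sgn := sgn) (res := res) hK hw
    (i := m - 1) (by omega) (by omega) (by omega) le_rfl f
  rw [zero_mul, add_zero] at hle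
  have hcocycle : f + coboundary sdim F sgn res (m - 1) m h ∈ cocycles sdim F sgn res m := by
    rw [cocycles, Set.mem_ofPred_eq, coboundary_add,
      coboundary_coboundary sdim_strictMono ho hres (by omega) rfl, add_zero]
    exact hf
  have hzero := eq_zero_of_mockMin hK hw hm hd ht ht1 hε (by simpa using by positivity) hlinks hcbe
    hcocycle hmin (hle.trans_lt hsmall)
  exact hfB ⟨-h, by rw [coboundary_neg, ← eq_neg_of_add_eq_zero_left hzero]⟩

lemma skeletonExpandingLinks_of_le (hw : IsProperWeight sdim d w) {k : ℤ} (hmk : m ≤ k + 1)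
    (ht : 0 ≤ t) (ht1 : t ≤ 1)
    (hexp : ∀ u : SC Kc, -1 ≤ sdim u → sdim u ≤ k →
      LinkUgrSkeletonExpander sdim d w u (t ^ 2 ^ (k - sdim u).toNat) 1) :
    SkeletonExpandingLinks sdim d w m t := by
  intro j z hz
  refine (hexp z (by grind [sdim]) (by omega)).mono (fun x => (hw.pos x).le) ?_
  exact pow_le_pow_of_le_one ht ht1 (Nat.pow_le_pow_right two_pos (by omega))

end SimplicialCochains

end FK

open FK in
/-- criterion for cosystolic expansion of sheaves on simplicial complexes. -/
theorem statement0 (k : ℕ) :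
    ∃ K K' : ℝ, (0 < K ∧ K ≤ 1) ∧ (0 < K' ∧ K' ≤ 1) ∧
      ∀ (ι : Type) (Kc : Finset (Finset ι)),
        ∅ ∈ Kc →
        (∀ s ∈ Kc, ∀ t, t ⊆ s → t ∈ Kc) →
        ∀ d : ℤ, (k : ℤ) + 2 ≤ d →
        (∀ s ∈ Kc, ∃ t ∈ Kc, s ⊆ t ∧ (t.card : ℤ) - 1 = d) →
        ∀ w : SC Kc → ℝ, IsProperWeight (sdim (Kc := Kc)) d w →
        ∀ (R : Type) (_ : CommRing R) (sgn : SC Kc → SC Kc → R),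
          IsOrientation R (sdim (Kc := Kc)) sgn →
        ∀ (F : SC Kc → Type) (_ : ∀ x, AddCommGroup (F x)) (_ : ∀ x, Module R (F x))
          (res : ∀ x y : SC Kc, x ≤ y → (F x →ₗ[R] F y)),
          IsSheafRes R F res →
        ∀ ε : ℝ, 0 < ε → ε ≤ 1 →
        -- (1a)
        (∀ u : SC Kc, 0 ≤ sdim u → sdim u ≤ (k : ℤ) →
          LinkCbeGe (sdim (Kc := Kc)) F sgn res w d u (k : ℤ) ε) →
        -- (1b)
        (∀ u : SC Kc, 0 ≤ sdim u → sdim u ≤ (k : ℤ) + 1 →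
          LinkCbeGe (sdim (Kc := Kc)) F sgn res w d u ((k : ℤ) + 1) ε) →
        -- (2)
        (∀ u : SC Kc, -1 ≤ sdim u → sdim u ≤ (k : ℤ) →
          LinkUgrSkeletonExpander (sdim (Kc := Kc)) d w u
            ((K * ε) ^ 2 ^ ((k : ℤ) - sdim u).toNat) 1) →
        (∀ f : Cochain (sdim (Kc := Kc)) F (k : ℤ),
            K' * (K * ε) ^ (2 ^ (k + 2) - 1) *
                distTo (sdim (Kc := Kc)) F w f (cocycles (sdim (Kc := Kc)) F sgn res (k : ℤ)) ≤
              cnorm (sdim (Kc := Kc)) F w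
                (coboundary (sdim (Kc := Kc)) F sgn res (k : ℤ) ((k : ℤ) + 1) f)) ∧
        (∀ f : Cochain (sdim (Kc := Kc)) F (k : ℤ),
            f ∈ cocycles (sdim (Kc := Kc)) F sgn res (k : ℤ) →
            f ∉ coboundariesSet (sdim (Kc := Kc)) F sgn res (k : ℤ) →
            K' * (K * ε) ^ (2 ^ (k + 1) - 1) ≤ cnorm (sdim (Kc := Kc)) F w f) := by
  have hK'1 : (2 * 4 ^ (k + 2) : ℝ)⁻¹ ≤ 1 := inv_le_one_of_one_le₀ <| by
    linarith [one_le_pow₀ (n := k + 2) (by norm_num : (1 : ℝ) ≤ 4)]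
  have hK1 : ((64 : ℝ) ^ (k + 3))⁻¹ ≤ 1 := inv_le_one_of_one_le₀ (one_le_pow₀ (by norm_num))
  refine ⟨(64 ^ (k + 3))⁻¹, (2 * 4 ^ (k + 2))⁻¹, ⟨by positivity, hK1⟩, ⟨by positivity, hK'1⟩, ?_⟩
  intro ι Kc hempty hdown d hd _ w hw R _ sgn ho F _ _ res hres ε hε hε1 hcbe₀ hcbe₁ hexp
  set t : ℝ := (64 ^ (k + 3))⁻¹ * ε
  have hK : IsLowerSet (Kc : Set (Finset ι)) := fun s s' hs's hs => hdown s hs s' hs's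
  have ht : 0 < t := by positivity
  have ht1 : t ≤ 1 := mul_le_one₀ hK1 hε.le hε1
  have hlarge : 64 ^ (k + 3) * t = ε := mul_inv_cancel_left₀ (by positivity) ε
  have hsmall : 64 ^ (k + 2) * t ≤ ε := by
    rw [← hlarge]
    gcongr
    · norm_num
    · omega
  constructor
  · exact mul_distTo_cocycles_le_cnorm_coboundary hK hempty hw ho hres (by push_cast; rfl)
      (by omega) hd ht ht1 hlarge.le (skeletonExpandingLinks_of_le hw le_rfl ht.le ht1 hexp) hcbe₁
  · intro f hf hfB
    refine (mul_le_of_le_one_left (by positivity) hK'1).trans ?_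
    exact pow_le_cnorm_of_notMem_coboundariesSet hK hw ho hres (by push_cast; rfl) (by omega) ht ht1
      hsmall (skeletonExpandingLinks_of_le hw (by omega) ht.le ht1 hexp) hcbe₀ hf hfB
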